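/- Let n ≥ 1 and let θ be a fixed nonnegative bounded measurable function supported in Q = (-1/2,1/2)^n with ∫θ = 1. (i) If g is integrable with ∫_{ℝ^n} |g(x)|(1 + ln₊|g(x)| + ln₊|x|) dx < ∞, and f is integrable with |f| ≤ |g| almost everywhere and ∫ f dx = 0, then f belongs to H^1(ℝ^n). (ii) Conversely, let S be a set of integrable functions on ℝ^n that is closed under addition, contains θ, and has the property that every integrable f with ∫ f dx = 0 and |f| ≤ |g| almost everywhere for some g ∈ S belongs to H^1(ℝ^n); then every nonnegative g ∈ S satisfies ∫_{ℝ^n} g(x)(1 + ln₊ g(x) + ln₊|x|) dx < ∞. -/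

import Mathlib

open MeasureTheory Real Set Metric ENNReal

noncomputable section

/-- `ℝ^n` with the Euclidean norm. -/
abbrev En (n : ℕ) := EuclideanSpace ℝ (Fin n)

/-- `ln₊ t = max (ln t) 0`. -/
def lnp (t : ℝ) : ℝ := max (Real.log t) 0

/-- The unit cube `Q = (-1/2, 1/2)^n`. -/
def unitQ (n : ℕ) : Set (En n) := {x | ∀ i, -(1/2 : ℝ) < x i ∧ x i < 1/2}

/-- The dilate `φ_t(y) = t^{-n} φ(y/t)` convolved with `f` at `x`:
`(φ_t ∗ f)(x) = ∫ t^{-n} φ((x-y)/t) f(y) dy`. -/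
def phiConv (n : ℕ) (φ f : En n → ℝ) (t : ℝ) (x : En n) : ℝ :=
  ∫ y, (t ^ n)⁻¹ * φ (t⁻¹ • (x - y)) * f y

/-- The maximal function `𝓜_φ f(x) = sup_{t>0} |(φ_t ∗ f)(x)|`. -/
def Mphi (n : ℕ) (φ f : En n → ℝ) (x : En n) : ℝ :=
  ⨆ t : {t : ℝ // 0 < t}, |phiConv n φ f t.1 x|

/-- A smooth function supported in the closed unit ball with integral `1`. -/
def IsTestFun (n : ℕ) (φ : En n → ℝ) : Prop :=
  ContDiff ℝ (⊤ : ℕ∞) φ ∧ (∀ x, x ∉ Metric.closedBall (0 : En n) 1 → φ x = 0) ∧ (∫ x, φ x) = 1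

/-- Membership in the Hardy space `H^1(ℝ^n)`: the maximal function `𝓜_φ f` is
integrable for every admissible `φ`. -/
def MemH1 (n : ℕ) (f : En n → ℝ) : Prop :=
  ∀ φ : En n → ℝ, IsTestFun n φ → Integrable (Mphi n φ f)

/-!
For `f` of mean zero, split the dilations in `𝓜_φ f(x)` at `t ∼ (1 + |x|) / 2`. The cancellation
bounds the large ones by `∫ K(x, y) |f(y)| dy` for a kernel with
`∫ K(x, y) dx ≲ 1 + ln₊ |y|`. The small ones are bounded by a local maximal function, and its
integrability follows from the weak-type inequality with a threshold that decays in `|x|`: this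
decay makes the threshold integrable and costs only the factor `ln₊ |x|`.

Conversely, given `u = |g|`, subtract a bounded compactly supported `b` with `|u - b| ≤ u` and
`∫ (u - b) = 0`, and take a nonnegative `φ` that attains its maximum on a ball around the origin.
Where averages of `u` exceed a large multiple of `sup |b|` they are controlled by the maximal
function of `u - b`, and the reverse weak-type inequality (a Vitali covering) then gives
integrability of `u ln₊ u`. At dilation `4 |x|` the mean-zero function `u - b` satisfies
`-φ_t ∗ (u - b)(x) ≳ |x|^{-n} ∫_{|y| > 5 |x|} u`, and integrating this over `x` in polar coordinates
gives integrability of `u(x) ln₊ |x|`.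
-/

open Filter Topology Module

lemma lnp_eq_posLog (t : ℝ) : lnp t = log⁺ t := max_comm _ _

section LayerCake

variable {α : Type*} [MeasurableSpace α] {μ : Measure α}

lemma volume_setOf_pos_ofReal_lt (a : ℝ≥0∞) :
    volume {l : ℝ | 0 < l ∧ ENNReal.ofReal l < a} = a := by
  rcases eq_or_ne a ⊤ with rfl | ha
  · simpa only [ofReal_lt_top, and_true] using! Real.volume_Ioi (a := 0)
  · have hIoo : {l : ℝ | 0 < l ∧ ENNReal.ofReal l < a} = Ioo 0 a.toReal :=
      ext fun l => and_congr_right fun hl => ofReal_lt_iff_lt_toReal hl.le ha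
    rw [hIoo, Real.volume_Ioo, sub_zero, ofReal_toReal ha]

lemma lintegral_eq_lintegral_measure_ofReal_lt [SFinite μ] {F : α → ℝ≥0∞} (hF : Measurable F) :
    ∫⁻ x, F x ∂μ = ∫⁻ l in Ioi (0 : ℝ), μ {x | ENNReal.ofReal l < F x} := by
  have hmeas : MeasurableSet {p : ℝ × α | 0 < p.1 ∧ ENNReal.ofReal p.1 < F p.2} :=
    (measurableSet_lt measurable_const measurable_fst).inter
      (measurableSet_lt (ENNReal.measurable_ofReal.comp measurable_fst) (hF.comp measurable_snd))
  calc ∫⁻ x, F x ∂μ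
      = (volume.prod μ) {p : ℝ × α | 0 < p.1 ∧ ENNReal.ofReal p.1 < F p.2} := by
        rw [Measure.prod_apply_symm hmeas]
        exact lintegral_congr fun x => (volume_setOf_pos_ofReal_lt (F x)).symm
    _ = ∫⁻ l in Ioi (0 : ℝ), μ {x | ENNReal.ofReal l < F x} := by
        rw [Measure.prod_apply hmeas, ← lintegral_indicator measurableSet_Ioi]
        refine lintegral_congr fun l => ?_
        by_cases hl : 0 < l <;> simp [hl]

lemma lintegral_le_lintegral_measure_ofReal_lt [SFinite μ] (F : α → ℝ≥0∞) :
    ∫⁻ x, F x ∂μ ≤ ∫⁻ l in Ioi (0 : ℝ), μ {x | ENNReal.ofReal l < F x} := by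
  obtain ⟨G, hG, hGF, hFG⟩ := exists_measurable_le_lintegral_eq μ F
  rw [hFG, lintegral_eq_lintegral_measure_ofReal_lt hG]
  exact lintegral_mono fun l => measure_mono fun x hx => lt_of_lt_of_le hx (hGF x)

lemma lintegral_Ico_inv {a b : ℝ} (ha : 0 ≤ a) (hb : 0 < b) :
    ∫⁻ l in Ico b a, ENNReal.ofReal l⁻¹ = ENNReal.ofReal (log⁺ (a / b)) := by
  rcases le_total a b with hab | hba
  · have hlog : log⁺ (a / b) = 0 := by
      rw [posLog_eq_zero_iff, abs_of_nonneg (by positivity)]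
      exact div_le_one_of_le₀ hab hb.le
    simp [Ico_eq_empty_of_le hab, hlog]
  · have hcont : ContinuousOn (fun l : ℝ => l⁻¹) (Icc b a) :=
      continuousOn_inv₀.mono fun l hl => (hb.trans_le hl.1).ne'
    have hlog : log⁺ (a / b) = log (a / b) :=
      posLog_eq_log (by rwa [abs_of_nonneg (by positivity), one_le_div hb])
    rw [setLIntegral_congr Ico_ae_eq_Ioc, ← ofReal_integral_eq_lintegral_ofReal
      (hcont.integrableOn_Icc.mono_set Ioc_subset_Icc_self), ← intervalIntegral.integral_of_le hba,
      integral_inv_of_pos hb (hb.trans_le hba), hlog]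
    exact (ae_restrict_mem measurableSet_Ioc).mono fun l hl => (inv_pos.2 (hb.trans hl.1)).le

lemma lintegral_mul_posLog_div [SFinite μ] {U : α → ℝ≥0∞} {w b : α → ℝ}
    (hU : Measurable U) (hw : Measurable w) (hb : Measurable b)
    (hw0 : ∀ y, 0 ≤ w y) (hb0 : ∀ y, 0 < b y) :
    ∫⁻ y, U y * ENNReal.ofReal (log⁺ (w y / b y)) ∂μ =
      ∫⁻ l in Ioi (0 : ℝ), ENNReal.ofReal l⁻¹ * ∫⁻ y in {y | b y ≤ l ∧ l < w y}, U y ∂μ := by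
  have hmeas : MeasurableSet {p : α × ℝ | b p.1 ≤ p.2 ∧ p.2 < w p.1} :=
    (measurableSet_le (by fun_prop) measurable_snd).inter
      (measurableSet_lt measurable_snd (by fun_prop))
  let K : α → ℝ → ℝ≥0∞ := fun y l =>
    {p : α × ℝ | b p.1 ≤ p.2 ∧ p.2 < w p.1}.indicator
      (fun p => U p.1 * ENNReal.ofReal p.2⁻¹) (y, l)
  have hKmeas : Measurable (Function.uncurry K) :=
    Measurable.indicator (by fun_prop) hmeas
  have hfst (y : α) : ∫⁻ l in Ioi (0 : ℝ), K y l = U y * ENNReal.ofReal (log⁺ (w y / b y)) := by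
    have hpos : Ico (b y) (w y) ⊆ Ioi 0 := fun l hl => (hb0 y).trans_le hl.1
    have hKy : K y = (Ico (b y) (w y)).indicator fun l => U y * ENNReal.ofReal l⁻¹ := rfl
    rw [hKy, setLIntegral_indicator measurableSet_Ico,
      inter_eq_left.2 hpos, lintegral_const_mul _ (by fun_prop), lintegral_Ico_inv (hw0 y) (hb0 y)]
  have hsnd (l : ℝ) : ∫⁻ y, K y l ∂μ =
      ENNReal.ofReal l⁻¹ * ∫⁻ y in {y | b y ≤ l ∧ l < w y}, U y ∂μ := by
    have hKl : (fun y => K y l) =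
        {y | b y ≤ l ∧ l < w y}.indicator fun y => U y * ENNReal.ofReal l⁻¹ := rfl
    have hslice : MeasurableSet {y | b y ≤ l ∧ l < w y} := measurable_prodMk_right hmeas
    rw [hKl, lintegral_indicator hslice, lintegral_mul_const _ hU, mul_comm]
  calc ∫⁻ y, U y * ENNReal.ofReal (log⁺ (w y / b y)) ∂μ
      = ∫⁻ y, (∫⁻ l in Ioi (0 : ℝ), K y l) ∂μ := by simp only [hfst]
    _ = ∫⁻ l in Ioi (0 : ℝ), ∫⁻ y, K y l ∂μ := lintegral_lintegral_swap hKmeas.aemeasurable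
    _ = _ := by simp only [hsnd]

end LayerCake

section Covering

variable {X ι : Type*} [PseudoMetricSpace X] [MeasurableSpace X] {μ : Measure X}

/-- The set where the uncentred Hardy–Littlewood maximal function of `h` reaches the level `l`. -/
def maximalSuperlevel (μ : Measure X) (h : X → ℝ≥0∞) (l : ℝ≥0∞) : Set X :=
  ⋃ p ∈ {p : X × ℝ | 0 < p.2 ∧ l ≤ ⨍⁻ y in closedBall p.1 p.2, h y ∂μ}, closedBall p.1 p.2

lemma closedBall_subset_maximalSuperlevel {h : X → ℝ≥0∞} {l : ℝ≥0∞} {x : X} {r : ℝ} (hr : 0 < r)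
    (hl : l ≤ ⨍⁻ y in closedBall x r, h y ∂μ) : closedBall x r ⊆ maximalSuperlevel μ h l :=
  subset_biUnion_of_mem (u := fun p : X × ℝ => closedBall p.1 p.2) (x := (x, r)) ⟨hr, hl⟩

lemma le_setLAverage_closedBall_iff [ProperSpace X] [μ.IsOpenPosMeasure]
    [IsFiniteMeasureOnCompacts μ] {h : X → ℝ≥0∞} {l : ℝ≥0∞} {x : X} {r : ℝ} (hr : 0 < r) :
    l ≤ ⨍⁻ y in closedBall x r, h y ∂μ ↔
      l * μ (closedBall x r) ≤ ∫⁻ y in closedBall x r, h y ∂μ := by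
  rw [setLAverage_eq, ENNReal.le_div_iff_mul_le (.inl (measure_closedBall_pos μ x hr).ne')
    (.inl measure_closedBall_lt_top.ne)]

lemma measure_biUnion_closedBall_le_of_enlargement_le [SecondCountableTopology X]
    [OpensMeasurableSpace X] {ν : Measure X} {t : Set ι} {c : ι → X}
    {r : ι → ℝ} {R : ℝ} (hr0 : ∀ i ∈ t, 0 < r i) (hrR : ∀ i ∈ t, r i ≤ R)
    (hle : ∀ i ∈ t, μ (closedBall (c i) (5 * r i)) ≤ ν (closedBall (c i) (r i))) :
    μ (⋃ i ∈ t, closedBall (c i) (r i)) ≤ ν (⋃ i ∈ t, closedBall (c i) (r i)) := by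
  obtain ⟨u, hut, hdisj, hcover⟩ :=
    Vitali.exists_disjoint_subfamily_covering_enlargement_closedBall t c r R hrR 5 (by norm_num)
  have hcount : u.Countable := hdisj.countable_of_nonempty_interior fun i hi =>
    ⟨c i, ball_subset_interior_closedBall (mem_ball_self (hr0 i (hut hi)))⟩
  have hsub : (⋃ i ∈ t, closedBall (c i) (r i)) ⊆ ⋃ i ∈ u, closedBall (c i) (5 * r i) :=
    iUnion₂_subset fun i hi =>
      let ⟨j, hj, hij⟩ := hcover i hi
      hij.trans (subset_biUnion_of_mem (u := fun j => closedBall (c j) (5 * r j)) hj)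
  calc μ (⋃ i ∈ t, closedBall (c i) (r i))
      ≤ μ (⋃ i ∈ u, closedBall (c i) (5 * r i)) := measure_mono hsub
    _ ≤ ∑' i : u, μ (closedBall (c i) (5 * r i)) := measure_biUnion_le _ hcount _
    _ ≤ ∑' i : u, ν (closedBall (c i) (r i)) := ENNReal.tsum_le_tsum fun i => hle i (hut i.2)
    _ = ν (⋃ i ∈ u, closedBall (c i) (r i)) :=
        (measure_biUnion hcount hdisj fun i _ => measurableSet_closedBall).symm
    _ ≤ ν (⋃ i ∈ t, closedBall (c i) (r i)) := measure_mono (biUnion_subset_biUnion_left hut)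

end Covering

section AddHaar

variable {E : Type*} [NormedAddCommGroup E] [NormedSpace ℝ E] [FiniteDimensional ℝ E]
  [MeasurableSpace E] [BorelSpace E] {μ : Measure E} [μ.IsAddHaarMeasure]

lemma addHaar_closedBall_five_mul (x : E) {r : ℝ} (hr : 0 ≤ r) :
    μ (closedBall x (5 * r)) = 5 ^ finrank ℝ E * μ (closedBall x r) := by
  rw [Measure.addHaar_closedBall_mul μ x (by norm_num) hr, Measure.addHaar_closedBall_center μ x,
    ENNReal.ofReal_pow (by norm_num), ENNReal.ofReal_ofNat]

lemma ae_tendsto_setLAverage_closedBall {h : E → ℝ≥0∞} (hm : Measurable h)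
    (hh : ∫⁻ y, h y ∂μ ≠ ⊤) :
    ∀ᵐ x ∂μ, Tendsto (fun r => ⨍⁻ y in closedBall x r, h y ∂μ) (𝓝[>] 0) (𝓝 (h x)) := by
  filter_upwards [(Besicovitch.vitaliFamily μ).ae_tendsto_lintegral_div' hm hh] with x hx
  simpa only [setLAverage_eq] using! hx.comp (Besicovitch.tendsto_filterAt μ x)

variable [Nontrivial E]

lemma lintegral_norm_eq_lintegral_Ioi_pow_mul (μ : Measure E) [μ.IsAddHaarMeasure]
    {F : ℝ → ℝ≥0∞} (hF : Measurable F) :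
    ∫⁻ x, F ‖x‖ ∂μ = finrank ℝ E * μ (ball 0 1) *
      ∫⁻ r in Ioi (0 : ℝ), ENNReal.ofReal (r ^ (finrank ℝ E - 1)) * F r := by
  calc ∫⁻ x, F ‖x‖ ∂μ
      = ∫⁻ x : ({0}ᶜ : Set E), F ‖x.1‖ ∂μ.comap Subtype.val := by
        rw [lintegral_subtype_comap (measurableSet_singleton _).compl fun x => F ‖x‖,
          restrict_compl_singleton]
    _ = ∫⁻ p, F p.2 ∂μ.toSphere.prod (.volumeIoiPow (finrank ℝ E - 1)) := by
        rw [← μ.measurePreserving_homeomorphUnitSphereProd.lintegral_comp (by fun_prop)]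
        simp only [homeomorphUnitSphereProd_apply_snd_coe]
    _ = μ.toSphere univ * ∫⁻ r, F r ∂.volumeIoiPow (finrank ℝ E - 1) := by
        rw [lintegral_prod _ (by fun_prop)]
        simp only [lintegral_const, mul_comm]
    _ = _ := by
        rw [Measure.toSphere_apply_univ, Measure.volumeIoiPow,
          lintegral_withDensity_eq_lintegral_mul _ (by fun_prop) (by fun_prop)]
        congr 1
        exact lintegral_subtype_comap measurableSet_Ioi
          fun r : ℝ => ENNReal.ofReal (r ^ (finrank ℝ E - 1)) * F r

lemma lintegral_mul_posLog_norm_div (μ : Measure E) [μ.IsAddHaarMeasure] {U : E → ℝ≥0∞}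
    (hU : Measurable U) {c R : ℝ} (hc : 0 < c) (hR : 0 < R) :
    finrank ℝ E * μ (ball 0 1) * ∫⁻ y, U y * ENNReal.ofReal (log⁺ (‖y‖ / (c * R))) ∂μ =
      ∫⁻ x, ENNReal.ofReal (‖x‖ ^ finrank ℝ E)⁻¹ *
        ∫⁻ y in {y | R ≤ ‖x‖ ∧ c * ‖x‖ < ‖y‖}, U y ∂μ ∂μ := by
  set d := finrank ℝ E
  have hd : d - 1 + 1 = d := Nat.sub_add_cancel finrank_pos
  let G : ℝ → ℝ≥0∞ := fun r => ∫⁻ y in {y | R ≤ r ∧ c * r < ‖y‖}, U y ∂μ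
  have hG : Measurable G := by
    have hanti : Antitone fun r => ∫⁻ y in {y : E | c * r < ‖y‖}, U y ∂μ := fun r s hrs =>
      lintegral_mono_set fun y (hy : c * s < ‖y‖) => (by gcongr : c * r ≤ c * s).trans_lt hy
    convert hanti.measurable.indicator (measurableSet_Ici (a := R)) using 1
    ext r
    by_cases hr : R ≤ r <;> simp [G, hr]
  have hpow {r : ℝ} (hr : r ∈ Ioi 0) :
      ENNReal.ofReal (r ^ (d - 1)) * (ENNReal.ofReal (r ^ d)⁻¹ * G r) =
        ENNReal.ofReal r⁻¹ * G r := by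
    have hr0 : 0 < r := hr
    rw [← mul_assoc, ← ofReal_mul (by positivity), ← hd, Nat.add_sub_cancel, pow_succ, mul_inv,
      mul_inv_cancel_left₀ (by positivity)]
  calc finrank ℝ E * μ (ball 0 1) * ∫⁻ y, U y * ENNReal.ofReal (log⁺ (‖y‖ / (c * R))) ∂μ
      = d * μ (ball 0 1) * ∫⁻ r in Ioi 0, ENNReal.ofReal r⁻¹ * G r := by
        simp only [← div_div]
        rw [lintegral_mul_posLog_div hU (by fun_prop) measurable_const
          (fun y => by positivity) fun _ => hR]
        simp only [G, lt_div_iff₀' hc]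
        rfl
    _ = ∫⁻ x, ENNReal.ofReal (‖x‖ ^ d)⁻¹ * G ‖x‖ ∂μ := by
        rw [lintegral_norm_eq_lintegral_Ioi_pow_mul μ (by fun_prop :
          Measurable fun r : ℝ => ENNReal.ofReal (r ^ d)⁻¹ * G r),
          setLIntegral_congr_fun measurableSet_Ioi fun r hr => hpow hr]

lemma exists_forall_radius_le_of_le_setLAverage {h : E → ℝ≥0∞} (hh : ∫⁻ y, h y ∂μ ≠ ⊤)
    {l : ℝ≥0∞} (hl : l ≠ 0) :
    ∃ R, ∀ x r, 0 < r → l ≤ ⨍⁻ y in closedBall x r, h y ∂μ → r ≤ R := by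
  have hv : l * μ (ball 0 1) ≠ 0 := mul_ne_zero hl (measure_ball_pos μ 0 one_pos).ne'
  refine ⟨max 1 ((∫⁻ y, h y ∂μ) / (l * μ (ball 0 1))).toReal, fun x r hr havg => ?_⟩
  refine (le_total r 1).elim (fun h1 => h1.trans (le_max_left _ _)) fun h1 =>
    le_max_of_le_right ?_
  have hpow : r ≤ r ^ finrank ℝ E := le_self_pow₀ h1 finrank_pos.ne'
  refine (ofReal_le_iff_le_toReal (ENNReal.div_ne_top hh hv)).1 ?_
  refine ENNReal.le_div_iff_mul_le (.inl hv) (.inr hh) |>.2 ?_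
  calc ENNReal.ofReal r * (l * μ (ball 0 1))
      ≤ l * (ENNReal.ofReal (r ^ finrank ℝ E) * μ (ball 0 1)) := by
        rw [mul_left_comm]; gcongr
    _ = l * μ (closedBall x r) := by rw [Measure.addHaar_closedBall μ x hr.le]
    _ ≤ ∫⁻ y in closedBall x r, h y ∂μ := (le_setLAverage_closedBall_iff hr).1 havg
    _ ≤ ∫⁻ y, h y ∂μ := setLIntegral_le_lintegral _ _

lemma mul_measure_maximalSuperlevel_le (h : E → ℝ≥0∞) (l : ℝ≥0∞) :
    l * μ (maximalSuperlevel μ h l) ≤ 5 ^ finrank ℝ E * ∫⁻ y, h y ∂μ := by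
  rcases eq_or_ne l 0 with rfl | hl
  · simp
  by_cases hh : ∫⁻ y, h y ∂μ = ⊤
  · simp [hh]
  obtain ⟨R, hR⟩ := exists_forall_radius_le_of_le_setLAverage hh hl
  refine (measure_biUnion_closedBall_le_of_enlargement_le (μ := l • μ)
    (ν := (5 : ℝ≥0∞) ^ finrank ℝ E • μ.withDensity h) (fun p hp => hp.1)
    (fun p hp => hR _ _ hp.1 hp.2) fun p hp => ?_).trans ?_
  · rw [Measure.smul_apply, smul_eq_mul, addHaar_closedBall_five_mul _ hp.1.le, mul_left_comm]
    simpa [withDensity_apply _ measurableSet_closedBall] using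
      mul_le_mul_right ((le_setLAverage_closedBall_iff hp.1).1 hp.2) (5 ^ finrank ℝ E)
  · rw [Measure.smul_apply, smul_eq_mul, ← setLIntegral_univ, ← withDensity_apply _ .univ]
    gcongr
    exact subset_univ _

lemma ae_exists_stopping_radius {h : E → ℝ≥0∞} (hm : Measurable h) (hh : ∫⁻ y, h y ∂μ ≠ ⊤)
    {l : ℝ≥0∞} (hl : l ≠ 0) :
    ∀ᵐ x ∂μ, l < h x → ∃ r, 0 < r ∧ l ≤ ⨍⁻ y in closedBall x r, h y ∂μ ∧
      ¬ l ≤ ⨍⁻ y in closedBall x (5 * r), h y ∂μ := by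
  obtain ⟨R, hR⟩ := exists_forall_radius_le_of_le_setLAverage hh hl
  filter_upwards [ae_tendsto_setLAverage_closedBall hm hh] with x hx hlx
  let S : Set ℝ := {r | 0 < r ∧ l ≤ ⨍⁻ y in closedBall x r, h y ∂μ}
  have hbdd : BddAbove S := ⟨R, fun r hr => hR x r hr.1 hr.2⟩
  obtain ⟨r₀, hr₀⟩ : S.Nonempty :=
    (eventually_mem_nhdsWithin.and ((hx.eventually_const_lt hlx).mono fun r hr => hr.le)).exists
  have hsup : 0 < sSup S := hr₀.1.trans_le (le_csSup hbdd hr₀)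
  obtain ⟨r, hr, hlt⟩ := exists_lt_of_lt_csSup ⟨r₀, hr₀⟩ (by linarith : sSup S / 5 < sSup S)
  refine ⟨r, hr.1, hr.2, fun h5 => ?_⟩
  have hle : 5 * r ≤ sSup S := le_csSup hbdd ⟨by linarith [hr.1], h5⟩
  linarith

lemma setLIntegral_lt_le_mul_measure_maximalSuperlevel {h : E → ℝ≥0∞} (hm : Measurable h)
    (hh : ∫⁻ y, h y ∂μ ≠ ⊤) {l : ℝ≥0∞} (hl : l ≠ 0) :
    ∫⁻ y in {y | l < h y}, h y ∂μ ≤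
      5 ^ finrank ℝ E * (l * μ (maximalSuperlevel μ h l)) := by
  let T : Set E := {x | ∃ r, 0 < r ∧ l ≤ ⨍⁻ y in closedBall x r, h y ∂μ ∧
    ¬ l ≤ ⨍⁻ y in closedBall x (5 * r), h y ∂μ}
  choose! r hr0 hr h5r using fun x (hx : x ∈ T) => hx
  obtain ⟨R, hR⟩ := exists_forall_radius_le_of_le_setLAverage hh hl
  have hcover : {y | l < h y} ≤ᵐ[μ] ⋃ x ∈ T, closedBall x (r x) := by
    filter_upwards [ae_exists_stopping_radius hm hh hl] with x hx hlx
    exact mem_iUnion₂.2 ⟨x, hx hlx, mem_closedBall_self (hr0 x (hx hlx)).le⟩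
  calc ∫⁻ y in {y | l < h y}, h y ∂μ
      ≤ ∫⁻ y in ⋃ x ∈ T, closedBall x (r x), h y ∂μ := lintegral_mono_set' hcover
    _ ≤ μ.withDensity h (⋃ x ∈ T, closedBall x (r x)) := withDensity_apply_le h _
    _ ≤ (5 ^ finrank ℝ E * l) • μ (⋃ x ∈ T, closedBall x (r x)) := by
        refine measure_biUnion_closedBall_le_of_enlargement_le (ν := (5 ^ finrank ℝ E * l) • μ)
          hr0 (fun x hx => hR x _ (hr0 x hx) (hr x hx)) fun x hx => ?_
        have h5 : 0 < 5 * r x := mul_pos (by norm_num) (hr0 x hx)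
        rw [withDensity_apply _ measurableSet_closedBall, Measure.smul_apply, smul_eq_mul,
          mul_right_comm, ← addHaar_closedBall_five_mul x (hr0 x hx).le, mul_comm _ l]
        exact (not_le.1 (mt (le_setLAverage_closedBall_iff h5).2 (h5r x hx))).le
    _ ≤ 5 ^ finrank ℝ E * (l * μ (maximalSuperlevel μ h l)) := by
        rw [smul_eq_mul, mul_assoc]
        gcongr
        exact iUnion₂_subset fun x hx =>
          closedBall_subset_maximalSuperlevel (hr0 x hx) (hr x hx)

end AddHaar

section LocalMaximal

variable {E : Type*} [NormedAddCommGroup E] [NormedSpace ℝ E]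

/-- An integrable weight, playing the role of the level below which superlevel sets of the local
maximal function need not be estimated. -/
def decayWeight (x : E) : ℝ := ((1 + ‖x‖) ^ (finrank ℝ E + 1))⁻¹

lemma decayWeight_pos (x : E) : 0 < decayWeight x := by
  unfold decayWeight; positivity

lemma decayWeight_div_le {x y : E} (hxy : dist y x ≤ (1 + ‖x‖) / 2) :
    decayWeight y / 2 ^ (finrank ℝ E + 1) ≤ decayWeight x := by
  have hnorm : 1 + ‖x‖ ≤ (1 + ‖y‖) * 2 := by
    linarith [norm_sub_norm_le x y, dist_eq_norm' y x]
  rw [decayWeight, decayWeight, div_eq_mul_inv, ← mul_inv, ← mul_pow]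
  gcongr

lemma posLog_two_mul_div_decayWeight_le (a : ℝ) (y : E) :
    log⁺ (2 * |a| / (decayWeight y / 2 ^ (finrank ℝ E + 1))) ≤
      (2 * finrank ℝ E + 3) * (1 + log⁺ a + log⁺ ‖y‖) := by
  have hsplit : 2 * |a| / (decayWeight y / 2 ^ (finrank ℝ E + 1)) =
      |a| * (2 * (2 * (1 + ‖y‖)) ^ (finrank ℝ E + 1)) := by
    rw [decayWeight, mul_pow]
    field_simp
  have hlog2 : Real.log 2 ≤ 1 := by linarith [log_two_lt_d9]
  have hposLog2 : log⁺ (2 : ℝ) = Real.log 2 := posLog_eq_log (by norm_num)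
  have hnorm : log⁺ (2 * (1 + ‖y‖)) ≤ 2 + log⁺ ‖y‖ := by
    linarith [posLog_mul (x := 2) (y := 1 + ‖y‖), posLog_add (x := 1) (y := ‖y‖), posLog_one]
  have hpow : log⁺ (2 * (2 * (1 + ‖y‖)) ^ (finrank ℝ E + 1)) ≤
      1 + (finrank ℝ E + 1) * (2 + log⁺ ‖y‖) := by
    refine posLog_mul.trans ?_
    rw [posLog_pow, hposLog2]
    push_cast
    gcongr
  have hprod : 0 ≤ (finrank ℝ E : ℝ) * (2 * log⁺ a + log⁺ ‖y‖) :=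
    mul_nonneg (Nat.cast_nonneg _) (by linarith [posLog_nonneg (x := a), posLog_nonneg (x := ‖y‖)])
  rw [hsplit]
  refine posLog_mul.trans ?_
  rw [posLog_abs]
  linarith [posLog_nonneg (x := a), posLog_nonneg (x := ‖y‖)]

variable [MeasurableSpace E] [BorelSpace E]

lemma measurable_decayWeight : Measurable (decayWeight : E → ℝ) := by
  unfold decayWeight; fun_prop

/-- The Hardy–Littlewood maximal function restricted to the scales at which `1 + ‖·‖` does not
change by more than a factor `2`. -/
def localMaximal (μ : Measure E) (h : E → ℝ≥0∞) (x : E) : ℝ≥0∞ :=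
  ⨆ t ∈ Ioc 0 ((1 + ‖x‖) / 2), ⨍⁻ y in closedBall x t, h y ∂μ

variable [FiniteDimensional ℝ E] {μ : Measure E} [μ.IsAddHaarMeasure]

lemma lintegral_decayWeight_lt_top (μ : Measure E) [μ.IsAddHaarMeasure] :
    ∫⁻ x, ENNReal.ofReal (decayWeight x) ∂μ < ⊤ := by
  have hdim : (finrank ℝ E : ℝ) < (finrank ℝ E + 1 : ℕ) := by simp
  have hrpow (x : E) :
      (1 + ‖x‖) ^ (-((finrank ℝ E + 1 : ℕ) : ℝ)) = decayWeight x := by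
    rw [Real.rpow_neg (by positivity), Real.rpow_natCast, decayWeight]
  simpa only [hrpow] using finite_integral_one_add_norm (μ := μ) hdim

lemma setOf_lt_localMaximal_subset_maximalSuperlevel (u : E → ℝ) (l : ℝ) :
    {x | ENNReal.ofReal l < localMaximal μ (‖u ·‖ₑ) x ∧ decayWeight x ≤ l} ⊆
      maximalSuperlevel μ ({y | decayWeight y / 2 ^ (finrank ℝ E + 1) ≤ l ∧
        l < 2 * |u y|}.indicator (‖u ·‖ₑ)) (ENNReal.ofReal (l / 2)) := by
  rintro x ⟨hx, hWx⟩
  obtain ⟨t, ⟨ht0, htx⟩, ht⟩ : ∃ t ∈ Ioc 0 ((1 + ‖x‖) / 2),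
      ENNReal.ofReal l < ⨍⁻ y in closedBall x t, ‖u y‖ₑ ∂μ := by
    simpa only [localMaximal, lt_iSup_iff, exists_prop] using hx
  set D : Set E := {y | decayWeight y / 2 ^ (finrank ℝ E + 1) ≤ l ∧ l < 2 * |u y|}
  have hpt : ∀ y ∈ closedBall x t,
      ‖u y‖ₑ ≤ D.indicator (‖u ·‖ₑ) y + ENNReal.ofReal (l / 2) := by
    intro y hy
    by_cases hyD : y ∈ D
    · rw [indicator_of_mem hyD]
      exact le_self_add
    · rw [indicator_of_notMem hyD, zero_add, enorm_eq_ofReal_abs]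
      have hyl : 2 * |u y| ≤ l :=
        not_lt.1 fun h => hyD ⟨(decayWeight_div_le (le_trans hy htx)).trans hWx, h⟩
      exact ofReal_le_ofReal (by linarith)
  have hl0 : 0 ≤ l := (decayWeight_pos x).le.trans hWx
  have hsum : ENNReal.ofReal (l / 2) * μ (closedBall x t) +
      ENNReal.ofReal (l / 2) * μ (closedBall x t) ≤
      ∫⁻ y in closedBall x t, D.indicator (‖u ·‖ₑ) y ∂μ +
        ENNReal.ofReal (l / 2) * μ (closedBall x t) := by
    calc _ = ENNReal.ofReal l * μ (closedBall x t) := by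
          rw [← add_mul, ← ofReal_add (by positivity) (by positivity), add_halves]
      _ ≤ ∫⁻ y in closedBall x t, ‖u y‖ₑ ∂μ := (le_setLAverage_closedBall_iff ht0).1 ht.le
      _ ≤ ∫⁻ y in closedBall x t, (D.indicator (‖u ·‖ₑ) y + ENNReal.ofReal (l / 2)) ∂μ :=
          setLIntegral_mono' measurableSet_closedBall hpt
      _ = _ := by rw [lintegral_add_right _ measurable_const, setLIntegral_const]
  refine closedBall_subset_maximalSuperlevel ht0 ?_ (mem_closedBall_self ht0.le)
  exact (le_setLAverage_closedBall_iff ht0).2 ((ENNReal.add_le_add_iff_right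
    (ENNReal.mul_ne_top ofReal_ne_top measure_closedBall_lt_top.ne)).1 hsum)

lemma measure_lt_localMaximal_le [Nontrivial E] {u : E → ℝ} (hu : Measurable u) {l : ℝ}
    (hl : 0 < l) :
    μ {x | ENNReal.ofReal l < localMaximal μ (‖u ·‖ₑ) x ∧ decayWeight x ≤ l} ≤
      2 * 5 ^ finrank ℝ E * (ENNReal.ofReal l⁻¹ *
        ∫⁻ y in {y | decayWeight y / 2 ^ (finrank ℝ E + 1) ≤ l ∧ l < 2 * |u y|}, ‖u y‖ₑ ∂μ) := by
  have hD : MeasurableSet {y | decayWeight y / 2 ^ (finrank ℝ E + 1) ≤ l ∧ l < 2 * |u y|} :=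
    (measurableSet_le (measurable_decayWeight.div_const _) measurable_const).inter
      (measurableSet_lt measurable_const (hu.abs.const_mul 2))
  have hweak := (mul_le_mul_right (measure_mono
    (setOf_lt_localMaximal_subset_maximalSuperlevel (μ := μ) u l)) _).trans
    (mul_measure_maximalSuperlevel_le _ (ENNReal.ofReal (l / 2)))
  rw [lintegral_indicator hD] at hweak
  have hinv : ENNReal.ofReal (l / 2)⁻¹ = 2 * ENNReal.ofReal l⁻¹ := by
    rw [inv_div, div_eq_mul_inv, ofReal_mul zero_le_two, ofReal_ofNat]
  calc _ ≤ 5 ^ finrank ℝ E * _ / ENNReal.ofReal (l / 2) :=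
        (ENNReal.le_div_iff_mul_le (.inl (ofReal_pos.2 (half_pos hl)).ne')
          (.inl ofReal_ne_top)).2 ((mul_comm _ _).trans_le hweak)
    _ = _ := by rw [div_eq_mul_inv, ← ofReal_inv_of_pos (half_pos hl), hinv]; ring

lemma lintegral_localMaximal_le [Nontrivial E] {u : E → ℝ} (hu : Measurable u) :
    ∫⁻ x, localMaximal μ (‖u ·‖ₑ) x ∂μ ≤ ∫⁻ x, ENNReal.ofReal (decayWeight x) ∂μ +
      2 * 5 ^ finrank ℝ E * ∫⁻ y, ‖u y‖ₑ *
        ENNReal.ofReal (log⁺ (2 * |u y| / (decayWeight y / 2 ^ (finrank ℝ E + 1)))) ∂μ := by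
  have hW : Measurable (decayWeight : E → ℝ) := measurable_decayWeight
  have hsplit (l : ℝ) (hl : l ∈ Ioi (0 : ℝ)) :
      μ {x | ENNReal.ofReal l < localMaximal μ (‖u ·‖ₑ) x} ≤
        μ {x | ENNReal.ofReal l < ENNReal.ofReal (decayWeight x)} +
        2 * 5 ^ finrank ℝ E * (ENNReal.ofReal l⁻¹ * ∫⁻ y in
          {y | decayWeight y / 2 ^ (finrank ℝ E + 1) ≤ l ∧ l < 2 * |u y|}, ‖u y‖ₑ ∂μ) := by
    refine (measure_mono fun x hx => ?_).trans
      ((measure_union_le _ _).trans (add_le_add_right (measure_lt_localMaximal_le hu hl) _))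
    rcases le_or_gt (decayWeight x) l with h | h
    · exact .inr ⟨hx, h⟩
    · exact .inl ((ofReal_lt_ofReal_iff (decayWeight_pos x)).2 h)
  have hanti : Antitone fun l : ℝ => μ {x | ENNReal.ofReal l < ENNReal.ofReal (decayWeight x)} :=
    fun l m hlm => measure_mono fun x hx => (ofReal_le_ofReal hlm).trans_lt hx
  calc ∫⁻ x, localMaximal μ (‖u ·‖ₑ) x ∂μ
      ≤ ∫⁻ l in Ioi (0 : ℝ), μ {x | ENNReal.ofReal l < localMaximal μ (‖u ·‖ₑ) x} :=
        lintegral_le_lintegral_measure_ofReal_lt _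
    _ ≤ _ := setLIntegral_mono' measurableSet_Ioi hsplit
    _ = _ := by
        rw [lintegral_add_left hanti.measurable,
          ← lintegral_eq_lintegral_measure_ofReal_lt (by fun_prop),
          lintegral_const_mul' _ _ (by finiteness),
          lintegral_mul_posLog_div (by fun_prop) (by fun_prop) (by fun_prop)
            (fun y => by positivity) (fun y => div_pos (decayWeight_pos y) (by positivity))]

end LocalMaximal

section LLogL

variable {E : Type*} [NormedAddCommGroup E] [MeasurableSpace E] {μ : Measure E}

/-- The integral `∫ |g| (1 + ln₊ |g| + ln₊ |x|) dμ`, as an extended nonnegative number; the absolute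
value inside the logarithm is implicit, since `log⁺` is even. -/
def lLogL (μ : Measure E) (g : E → ℝ) : ℝ≥0∞ :=
  ∫⁻ x, ‖g x‖ₑ * ENNReal.ofReal (1 + log⁺ (g x) + log⁺ ‖x‖) ∂μ

lemma lLogL_mono {f g : E → ℝ} (hfg : ∀ᵐ x ∂μ, |f x| ≤ |g x|) : lLogL μ f ≤ lLogL μ g := by
  refine lintegral_mono_ae (hfg.mono fun x hx => ?_)
  have hlog : log⁺ (f x) ≤ log⁺ (g x) := by
    simpa only [posLog_abs] using posLog_le_posLog (abs_nonneg _) hx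
  gcongr
  exact enorm_le_iff_norm_le.2 hx

lemma lintegral_enorm_mul_posLog_norm_le_lLogL (g : E → ℝ) :
    ∫⁻ x, ‖g x‖ₑ * ENNReal.ofReal (1 + log⁺ ‖x‖) ∂μ ≤ lLogL μ g :=
  lintegral_mono fun x => by
    gcongr
    exact le_add_of_nonneg_right posLog_nonneg

lemma lLogL_lt_top_of_posLog_div {u : E → ℝ} (hu : Measurable u) [OpensMeasurableSpace E]
    (hu_fin : ∫⁻ x, ‖u x‖ₑ ∂μ ≠ ⊤) {b R : ℝ} (hb : b ≠ 0) (hR : R ≠ 0)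
    (hlog : ∫⁻ x, ‖u x‖ₑ * ENNReal.ofReal (log⁺ (u x / b)) ∂μ ≠ ⊤)
    (hlog_norm : ∫⁻ x, ‖u x‖ₑ * ENNReal.ofReal (log⁺ (‖x‖ / R)) ∂μ ≠ ⊤) :
    lLogL μ u < ⊤ := by
  have hpt (x : E) : ‖u x‖ₑ * ENNReal.ofReal (1 + log⁺ (u x) + log⁺ ‖x‖) ≤
      ‖u x‖ₑ * ENNReal.ofReal (log⁺ (u x / b)) + ‖u x‖ₑ * ENNReal.ofReal (log⁺ (‖x‖ / R)) +
        ‖u x‖ₑ * ENNReal.ofReal (1 + log⁺ b + log⁺ R) := by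
    have hlog_u : log⁺ (u x) ≤ log⁺ (u x / b) + log⁺ b := by
      simpa only [div_mul_cancel₀ _ hb] using posLog_mul (x := u x / b) (y := b)
    have hlog_x : log⁺ ‖x‖ ≤ log⁺ (‖x‖ / R) + log⁺ R := by
      simpa only [div_mul_cancel₀ _ hR] using posLog_mul (x := ‖x‖ / R) (y := R)
    have hb0 : 0 ≤ log⁺ b := posLog_nonneg
    have hR0 : 0 ≤ log⁺ R := posLog_nonneg
    rw [← mul_add, ← mul_add, ← ofReal_add posLog_nonneg posLog_nonneg,
      ← ofReal_add (add_nonneg posLog_nonneg posLog_nonneg) (by positivity)]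
    refine mul_le_mul_right (ofReal_le_ofReal ?_) _
    linarith
  refine (lintegral_mono hpt).trans_lt ?_
  rw [lintegral_add_left (by fun_prop), lintegral_add_left (by fun_prop),
    lintegral_mul_const _ (by fun_prop)]
  finiteness

end LLogL

section Kernel

lemma lintegral_Ioi_mul_rpow_neg_two {a : ℝ} (ha : 0 < a) :
    ∫⁻ s in Ioi a, ENNReal.ofReal (a * s ^ (-2 : ℝ)) = 1 := by
  rw [← ofReal_integral_eq_lintegral_ofReal
    ((integrableOn_Ioi_rpow_of_lt (by norm_num) ha).const_mul a)
    ((ae_restrict_mem measurableSet_Ioi).mono fun s hs =>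
      mul_nonneg ha.le (Real.rpow_nonneg (ha.trans hs).le _)),
    integral_const_mul, integral_Ioi_rpow_of_lt (by norm_num) ha, ofReal_eq_one]
  norm_num [Real.rpow_neg_one, mul_inv_cancel₀ ha.ne']

lemma lintegral_Ioi_inv_mul_min_le {a : ℝ} (ha : 0 ≤ a) :
    ∫⁻ s in Ioi (1 : ℝ), ENNReal.ofReal (s⁻¹ * min 1 (a / s)) ≤ ENNReal.ofReal (1 + log⁺ a) := by
  rcases ha.eq_or_lt with rfl | ha
  · simp
  have hcover : Ioi (1 : ℝ) ⊆ Ico 1 a ∪ (Ici a ∩ Ioi 1) := fun s hs =>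
    (lt_or_ge s a).imp (fun h => ⟨hs.le, h⟩) (fun h => ⟨h, hs⟩)
  have hnear : ∀ s ∈ Ico 1 a, ENNReal.ofReal (s⁻¹ * min 1 (a / s)) ≤ ENNReal.ofReal s⁻¹ :=
    fun s hs => ofReal_le_ofReal
      (mul_le_of_le_one_right (inv_nonneg.2 (zero_le_one.trans hs.1)) (min_le_left _ _))
  have hfar : ∀ s ∈ Ici a,
      ENNReal.ofReal (s⁻¹ * min 1 (a / s)) ≤ ENNReal.ofReal (a * s ^ (-2 : ℝ)) := fun s hs => by
    have hs0 : 0 < s := ha.trans_le hs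
    refine ofReal_le_ofReal
      ((mul_le_mul_of_nonneg_left (min_le_right _ _) (inv_nonneg.2 hs0.le)).trans_eq ?_)
    rw [Real.rpow_neg hs0.le, Real.rpow_two]
    field_simp
  calc ∫⁻ s in Ioi (1 : ℝ), ENNReal.ofReal (s⁻¹ * min 1 (a / s))
      ≤ ∫⁻ s in Ico 1 a ∪ Ici a, ENNReal.ofReal (s⁻¹ * min 1 (a / s)) :=
        lintegral_mono_set (hcover.trans (union_subset_union_right _ inter_subset_left))
    _ ≤ (∫⁻ s in Ico 1 a, ENNReal.ofReal s⁻¹) +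
        ∫⁻ s in Ici a, ENNReal.ofReal (a * s ^ (-2 : ℝ)) :=
        (lintegral_union_le _ _ _).trans (add_le_add (setLIntegral_mono' measurableSet_Ico hnear)
          (setLIntegral_mono' measurableSet_Ici hfar))
    _ = ENNReal.ofReal (1 + log⁺ a) := by
        rw [lintegral_Ico_inv ha.le one_pos, div_one, ← setLIntegral_congr Ioi_ae_eq_Ici,
          lintegral_Ioi_mul_rpow_neg_two ha, ofReal_add zero_le_one posLog_nonneg, ofReal_one,
          add_comm]

variable {E : Type*} [NormedAddCommGroup E] [NormedSpace ℝ E]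

/-- A majorant, up to a constant, of the difference `φ_t(x - y) - φ_t(x)` over all the scales
`t ≥ (1 + ‖x‖) / 2`. -/
def largeScaleKernel (x y : E) : ℝ :=
  ((1 + ‖x‖) ^ finrank ℝ E)⁻¹ * min 1 (‖y‖ / (1 + ‖x‖))

lemma measurable_uncurry_largeScaleKernel [MeasurableSpace E] [OpensMeasurableSpace E]
    [SecondCountableTopology E] :
    Measurable (Function.uncurry (largeScaleKernel : E → E → ℝ)) := by
  unfold largeScaleKernel Function.uncurry; fun_prop

lemma lintegral_largeScaleKernel_le [FiniteDimensional ℝ E] [Nontrivial E] [MeasurableSpace E]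
    [BorelSpace E] (μ : Measure E) [μ.IsAddHaarMeasure] (y : E) :
    ∫⁻ x, ENNReal.ofReal (largeScaleKernel x y) ∂μ ≤
      finrank ℝ E * μ (ball 0 1) * ENNReal.ofReal (1 + log⁺ ‖y‖) := by
  have hdim : finrank ℝ E - 1 + 1 = finrank ℝ E := Nat.sub_add_cancel finrank_pos
  have hpt : ∀ r ∈ Ioi (0 : ℝ), ENNReal.ofReal (r ^ (finrank ℝ E - 1)) *
      ENNReal.ofReal (((1 + r) ^ finrank ℝ E)⁻¹ * min 1 (‖y‖ / (1 + r))) ≤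
      ENNReal.ofReal ((1 + r)⁻¹ * min 1 (‖y‖ / (1 + r))) := fun r (hr : 0 < r) => by
    have hpow : r ^ (finrank ℝ E - 1) * ((1 + r) ^ finrank ℝ E)⁻¹ ≤ (1 + r)⁻¹ := by
      rw [← div_eq_mul_inv, div_le_iff₀ (by positivity), ← hdim, pow_succ',
        inv_mul_cancel_left₀ (by positivity), hdim]
      exact pow_le_pow_left₀ hr.le (by linarith) _
    rw [← ofReal_mul (by positivity), ← mul_assoc]
    gcongr
  calc ∫⁻ x, ENNReal.ofReal (largeScaleKernel x y) ∂μ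
      = finrank ℝ E * μ (ball 0 1) *
        ∫⁻ r in Ioi (0 : ℝ), ENNReal.ofReal (r ^ (finrank ℝ E - 1)) *
          ENNReal.ofReal (((1 + r) ^ finrank ℝ E)⁻¹ * min 1 (‖y‖ / (1 + r))) :=
        lintegral_norm_eq_lintegral_Ioi_pow_mul μ (F := fun r => ENNReal.ofReal
          (((1 + r) ^ finrank ℝ E)⁻¹ * min 1 (‖y‖ / (1 + r)))) (by fun_prop)
    _ ≤ finrank ℝ E * μ (ball 0 1) *
        ∫⁻ r in Ioi (0 : ℝ), ENNReal.ofReal ((1 + r)⁻¹ * min 1 (‖y‖ / (1 + r))) :=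
        mul_le_mul_right (setLIntegral_mono' measurableSet_Ioi hpt) _
    _ = finrank ℝ E * μ (ball 0 1) *
        ∫⁻ s in Ioi (1 : ℝ), ENNReal.ofReal (s⁻¹ * min 1 (‖y‖ / s)) := by
        rw [← (measurePreserving_add_left volume (1 : ℝ)).setLIntegral_comp_preimage
          (s := Ioi 1) measurableSet_Ioi (by fun_prop), preimage_const_add_Ioi, sub_self]
    _ ≤ _ := by
        gcongr
        exact lintegral_Ioi_inv_mul_min_le (norm_nonneg y)

lemma lintegral_lintegral_largeScaleKernel_lt_top [FiniteDimensional ℝ E] [Nontrivial E]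
    [MeasurableSpace E] [BorelSpace E] {μ : Measure E} [μ.IsAddHaarMeasure] {u : E → ℝ}
    (hu : Measurable u) (hlog : lLogL μ u < ⊤) :
    ∫⁻ x, ∫⁻ y, ENNReal.ofReal (largeScaleKernel x y) * ‖u y‖ₑ ∂μ ∂μ < ⊤ := by
  have hK := measurable_uncurry_largeScaleKernel (E := E)
  rw [lintegral_lintegral_swap (by fun_prop)]
  calc ∫⁻ y, ∫⁻ x, ENNReal.ofReal (largeScaleKernel x y) * ‖u y‖ₑ ∂μ ∂μ
      ≤ ∫⁻ y, finrank ℝ E * μ (ball 0 1) * (‖u y‖ₑ * ENNReal.ofReal (1 + log⁺ ‖y‖)) ∂μ :=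
        lintegral_mono fun y => by
          rw [lintegral_mul_const' _ _ enorm_ne_top, mul_left_comm, mul_comm _ ‖u y‖ₑ]
          gcongr
          exact lintegral_largeScaleKernel_le μ y
    _ ≤ finrank ℝ E * μ (ball 0 1) * lLogL μ u := by
        rw [lintegral_const_mul _ (by fun_prop)]
        gcongr
        exact lintegral_enorm_mul_posLog_norm_le_lLogL u
    _ < ⊤ := by finiteness

lemma lintegral_localMaximal_lt_top [FiniteDimensional ℝ E] [Nontrivial E]
    [MeasurableSpace E] [BorelSpace E] {μ : Measure E} [μ.IsAddHaarMeasure] {u : E → ℝ}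
    (hu : Measurable u) (hlog : lLogL μ u < ⊤) :
    ∫⁻ x, localMaximal μ (‖u ·‖ₑ) x ∂μ < ⊤ := by
  refine (lintegral_localMaximal_le hu).trans_lt
    (ENNReal.add_lt_top.2 ⟨lintegral_decayWeight_lt_top μ, ENNReal.mul_lt_top (by finiteness) ?_⟩)
  calc ∫⁻ y, ‖u y‖ₑ *
        ENNReal.ofReal (log⁺ (2 * |u y| / (decayWeight y / 2 ^ (finrank ℝ E + 1)))) ∂μ
      ≤ ∫⁻ y, ENNReal.ofReal (2 * finrank ℝ E + 3) *
        (‖u y‖ₑ * ENNReal.ofReal (1 + log⁺ (u y) + log⁺ ‖y‖)) ∂μ :=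
        lintegral_mono fun y => by
          rw [mul_left_comm, ← ofReal_mul (by positivity)]
          gcongr
          exact posLog_two_mul_div_decayWeight_le (u y) y
    _ = ENNReal.ofReal (2 * finrank ℝ E + 3) * lLogL μ u :=
        lintegral_const_mul' _ _ ofReal_ne_top
    _ < ⊤ := by finiteness

end Kernel

section Convolution

lemma ofReal_inv_pow_mul_setLIntegral_closedBall {E : Type*} [NormedAddCommGroup E]
    [NormedSpace ℝ E] [FiniteDimensional ℝ E] [MeasurableSpace E] [BorelSpace E] {μ : Measure E}
    [μ.IsAddHaarMeasure] (h : E → ℝ≥0∞) (x : E) {t : ℝ} (ht : 0 < t) :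
    ENNReal.ofReal (t ^ finrank ℝ E)⁻¹ * ∫⁻ y in closedBall x t, h y ∂μ =
      μ (ball 0 1) * ⨍⁻ y in closedBall x t, h y ∂μ := by
  rw [← measure_mul_setLAverage h measure_closedBall_lt_top.ne,
    Measure.addHaar_closedBall μ x ht.le, mul_assoc, ← mul_assoc, ← ofReal_mul (by positivity),
    inv_mul_cancel₀ (by positivity), ofReal_one, one_mul]

variable {n : ℕ} {φ f f' : En n → ℝ} {t A : ℝ} {x : En n}

namespace IsTestFun

lemma hasCompactSupport (hφ : IsTestFun n φ) : HasCompactSupport φ :=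
  .intro (isCompact_closedBall 0 1) hφ.2.1

lemma apply_inv_smul_eq_zero (hφ : IsTestFun n φ) (ht : 0 < t) (hx : t < ‖x‖) :
    φ (t⁻¹ • x) = 0 := by
  refine hφ.2.1 _ fun hmem => hx.not_ge ?_
  rwa [mem_closedBall_zero_iff, norm_smul, norm_of_nonneg (by positivity), inv_mul_le_one₀ ht]
    at hmem

lemma exists_abs_le (hφ : IsTestFun n φ) : ∃ A, ∀ x, |φ x| ≤ A :=
  hφ.hasCompactSupport.exists_bound_of_continuous hφ.1.continuous

lemma exists_lipschitzWith (hφ : IsTestFun n φ) : ∃ L, LipschitzWith L φ :=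
  hφ.1.lipschitzWith_of_hasCompactSupport hφ.hasCompactSupport (by simp)

end IsTestFun

lemma integrable_phiConv (hφ : IsTestFun n φ) (hf : Integrable f) (t : ℝ) (x : En n) :
    Integrable fun y => (t ^ n)⁻¹ * φ (t⁻¹ • (x - y)) * f y := by
  obtain ⟨A, hA⟩ := hφ.exists_abs_le
  have hφc := hφ.1.continuous
  refine hf.bdd_mul (c := |(t ^ n)⁻¹| * A) (Continuous.aestronglyMeasurable (by fun_prop))
    (.of_forall fun y => ?_)
  rw [norm_mul, norm_eq_abs, norm_eq_abs]
  gcongr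
  exact hA _

lemma continuous_phiConv (hφ : IsTestFun n φ) (hf : Integrable f) (t : ℝ) :
    Continuous (phiConv n φ f t) := by
  obtain ⟨A, hA⟩ := hφ.exists_abs_le
  have hφc := hφ.1.continuous
  refine continuous_of_dominated (bound := fun y => |(t ^ n)⁻¹| * A * |f y|)
    (fun x => (integrable_phiConv hφ hf t x).aestronglyMeasurable)
    (fun x => .of_forall fun y => ?_) (hf.abs.const_mul _) (.of_forall fun y => by fun_prop)
  rw [norm_mul, norm_mul, norm_eq_abs, norm_eq_abs, norm_eq_abs]
  gcongr
  exact hA _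

lemma phiConv_congr_ae (h : f =ᵐ[volume] f') : phiConv n φ f = phiConv n φ f' := by
  funext t x
  exact integral_congr_ae (h.mono fun y hy => by simp only [hy])

lemma phiConv_sub (hφ : IsTestFun n φ) (hf : Integrable f) (hf' : Integrable f') (t : ℝ)
    (x : En n) : phiConv n φ (f - f') t x = phiConv n φ f t x - phiConv n φ f' t x := by
  rw [phiConv, phiConv, phiConv,
    ← integral_sub (integrable_phiConv hφ hf t x) (integrable_phiConv hφ hf' t x)]
  simp only [Pi.sub_apply, mul_sub]

lemma enorm_phiConv_le (hφ : IsTestFun n φ) (hA : ∀ x, |φ x| ≤ A)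
    (f : En n → ℝ) (x : En n) (ht : 0 < t) :
    ‖phiConv n φ f t x‖ₑ ≤
      ENNReal.ofReal A * volume (ball (0 : En n) 1) * ⨍⁻ y in closedBall x t, ‖f y‖ₑ ∂volume := by
  have hpt (y : En n) : ‖(t ^ n)⁻¹ * φ (t⁻¹ • (x - y)) * f y‖ₑ ≤
      (closedBall x t).indicator
        (fun y => ENNReal.ofReal A * ENNReal.ofReal (t ^ n)⁻¹ * ‖f y‖ₑ) y := by
    by_cases hy : y ∈ closedBall x t
    · rw [indicator_of_mem hy, enorm_mul, enorm_mul,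
        enorm_eq_ofReal (by positivity : 0 ≤ (t ^ n)⁻¹), mul_comm (ENNReal.ofReal _),
        enorm_eq_ofReal_abs]
      gcongr
      exact hA _
    · have hφ0 : φ (t⁻¹ • (x - y)) = 0 := by
        refine hφ.apply_inv_smul_eq_zero ht (not_le.1 fun hle => hy ?_)
        rwa [← dist_eq_norm, dist_comm] at hle
      simp [hφ0]
  calc ‖phiConv n φ f t x‖ₑ
      ≤ ∫⁻ y, ‖(t ^ n)⁻¹ * φ (t⁻¹ • (x - y)) * f y‖ₑ := enorm_integral_le_lintegral_enorm _
    _ ≤ ∫⁻ y in closedBall x t, ENNReal.ofReal A * ENNReal.ofReal (t ^ n)⁻¹ * ‖f y‖ₑ :=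
        (lintegral_mono hpt).trans_eq (lintegral_indicator measurableSet_closedBall _)
    _ = ENNReal.ofReal A * (ENNReal.ofReal (t ^ finrank ℝ (En n))⁻¹ *
          ∫⁻ y in closedBall x t, ‖f y‖ₑ) := by
        rw [lintegral_const_mul' _ _ (by finiteness), finrank_euclideanSpace_fin, mul_assoc]
    _ = _ := by rw [ofReal_inv_pow_mul_setLIntegral_closedBall _ _ ht, mul_assoc]

lemma phiConv_eq_integral_sub (hφ : IsTestFun n φ) (hf : Integrable f) (hf0 : ∫ x, f x = 0)
    (t : ℝ) (x : En n) :
    phiConv n φ f t x = ∫ y, (t ^ n)⁻¹ * (φ (t⁻¹ • (x - y)) - φ (t⁻¹ • x)) * f y := by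
  simp only [mul_sub, sub_mul]
  rw [integral_sub (integrable_phiConv hφ hf t x) (hf.const_mul _), integral_const_mul, hf0,
    mul_zero, sub_zero, phiConv]

lemma inv_pow_mul_abs_sub_le_largeScaleKernel {L : NNReal} (hA : ∀ x, |φ x| ≤ A)
    (hL : LipschitzWith L φ) (ht : (1 + ‖x‖) / 2 ≤ t) (y : En n) :
    (t ^ n)⁻¹ * |φ (t⁻¹ • (x - y)) - φ (t⁻¹ • x)| ≤
      2 ^ n * (2 * (A + L)) * largeScaleKernel x y := by
  have hx0 : 0 < 1 + ‖x‖ := by positivity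
  have hA0 : 0 ≤ A := (abs_nonneg _).trans (hA 0)
  have ht0 : 0 < t := by linarith
  have hpow : (t ^ n)⁻¹ ≤ 2 ^ n * ((1 + ‖x‖) ^ n)⁻¹ := by
    rw [← div_eq_mul_inv, ← div_pow, ← inv_pow]
    refine pow_le_pow_left₀ (by positivity) ?_ n
    rw [inv_le_comm₀ ht0 (by positivity), inv_div]
    exact ht
  have hbdd : |φ (t⁻¹ • (x - y)) - φ (t⁻¹ • x)| ≤ 2 * (A + L) * 1 := by
    linarith [abs_sub (φ (t⁻¹ • (x - y))) (φ (t⁻¹ • x)), hA (t⁻¹ • (x - y)), hA (t⁻¹ • x), L.2]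
  have hlip : |φ (t⁻¹ • (x - y)) - φ (t⁻¹ • x)| ≤ 2 * (A + L) * (‖y‖ / (1 + ‖x‖)) := by
    calc |φ (t⁻¹ • (x - y)) - φ (t⁻¹ • x)| ≤ L * ‖t⁻¹ • (x - y) - t⁻¹ • x‖ := hL.norm_sub_le _ _
      _ = L * (t⁻¹ * ‖y‖) := by
          rw [← smul_sub, norm_smul, sub_sub_cancel_left, norm_neg, norm_inv, norm_of_nonneg ht0.le]
      _ ≤ (A + L) * (((1 + ‖x‖) / 2)⁻¹ * ‖y‖) := by gcongr; linarith
      _ = _ := by field_simp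
  calc (t ^ n)⁻¹ * |φ (t⁻¹ • (x - y)) - φ (t⁻¹ • x)|
      ≤ 2 ^ n * ((1 + ‖x‖) ^ n)⁻¹ * (2 * (A + L) * min 1 (‖y‖ / (1 + ‖x‖))) := by
        rw [mul_min_of_nonneg _ _ (by positivity)]
        gcongr
        exact le_min hbdd hlip
    _ = _ := by rw [largeScaleKernel, finrank_euclideanSpace_fin]; ring

lemma enorm_phiConv_le_lintegral_largeScaleKernel {L : NNReal} (hφ : IsTestFun n φ)
    (hA : ∀ x, |φ x| ≤ A) (hL : LipschitzWith L φ) (hf : Integrable f) (hf0 : ∫ x, f x = 0)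
    (ht : (1 + ‖x‖) / 2 ≤ t) :
    ‖phiConv n φ f t x‖ₑ ≤ ENNReal.ofReal (2 ^ n * (2 * (A + L))) *
      ∫⁻ y, ENNReal.ofReal (largeScaleKernel x y) * ‖f y‖ₑ := by
  have ht0 : 0 < t := lt_of_lt_of_le (by positivity) ht
  have hA0 : 0 ≤ A := (abs_nonneg _).trans (hA 0)
  rw [phiConv_eq_integral_sub hφ hf hf0, ← lintegral_const_mul' _ _ ofReal_ne_top]
  refine (enorm_integral_le_lintegral_enorm _).trans (lintegral_mono fun y => ?_)
  rw [enorm_mul, ← mul_assoc, ← ofReal_mul (by positivity)]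
  gcongr
  rw [enorm_eq_ofReal_abs, abs_mul, abs_of_pos (by positivity : 0 < (t ^ n)⁻¹)]
  exact ofReal_le_ofReal (inv_pow_mul_abs_sub_le_largeScaleKernel hA hL ht y)

end Convolution

section ExtendedMaximalFunction

variable {n : ℕ} {φ f f' : En n → ℝ} {t A : ℝ} {x : En n}

/-- The maximal function `𝓜_φ f` with values in `[0, ∞]`; unlike `Mphi` it is not set to the junk
value `0` where the supremum is infinite. -/
def eMphi (n : ℕ) (φ f : En n → ℝ) (x : En n) : ℝ≥0∞ :=
  ⨆ t : {t : ℝ // 0 < t}, ‖phiConv n φ f t x‖ₑ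

lemma Mphi_eq_toReal_eMphi (φ f : En n → ℝ) (x : En n) :
    Mphi n φ f x = (eMphi n φ f x).toReal := by
  rw [eMphi, toReal_iSup fun _ => enorm_ne_top]
  simp only [toReal_enorm, norm_eq_abs, Mphi]

lemma eMphi_congr_ae (h : f =ᵐ[volume] f') : eMphi n φ f = eMphi n φ f' := by
  unfold eMphi
  rw [phiConv_congr_ae h]

lemma enorm_phiConv_le_eMphi (φ f : En n → ℝ) (x : En n) (ht : 0 < t) :
    ‖phiConv n φ f t x‖ₑ ≤ eMphi n φ f x :=
  le_iSup (fun s : {s : ℝ // 0 < s} => ‖phiConv n φ f s x‖ₑ) ⟨t, ht⟩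

lemma measurable_eMphi (hφ : IsTestFun n φ) (hf : Integrable f) : Measurable (eMphi n φ f) := by
  unfold eMphi
  exact (lowerSemicontinuous_iSup fun t : {t : ℝ // 0 < t} =>
    (continuous_phiConv hφ hf t).enorm.lowerSemicontinuous).measurable

lemma setOf_lt_eMphi_subset_maximalSuperlevel (hφ : IsTestFun n φ) (hA : ∀ x, |φ x| ≤ A)
    (f : En n → ℝ) (l : ℝ≥0∞) :
    {x | ENNReal.ofReal A * volume (ball (0 : En n) 1) * l < eMphi n φ f x} ⊆
      maximalSuperlevel volume (‖f ·‖ₑ) l := by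
  intro x hx
  obtain ⟨⟨t, ht⟩, hlt⟩ : ∃ t : {t : ℝ // 0 < t}, _ < ‖phiConv n φ f t x‖ₑ := lt_iSup_iff.1 hx
  have hl := lt_of_mul_lt_mul_left' (hlt.trans_le (enorm_phiConv_le hφ hA f x ht))
  exact closedBall_subset_maximalSuperlevel ht hl.le (mem_closedBall_self ht.le)

lemma ae_eMphi_ne_top [NeZero n] (hφ : IsTestFun n φ) (hf : Integrable f) :
    ∀ᵐ x, eMphi n φ f x ≠ ⊤ := by
  obtain ⟨A, hA⟩ := hφ.exists_abs_le
  rw [ae_iff]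
  simp only [not_not]
  by_contra hpos
  have hfin : 5 ^ finrank ℝ (En n) * ∫⁻ x, ‖f x‖ₑ ≠ ⊤ :=
    ENNReal.mul_ne_top (by finiteness) hf.2.ne
  obtain ⟨k, hk⟩ := ENNReal.exists_nat_mul_gt hpos hfin
  refine hk.not_ge ((mul_le_mul_right (measure_mono fun x hx => ?_) _).trans
    (mul_measure_maximalSuperlevel_le (‖f ·‖ₑ) (k : ℝ≥0∞)))
  refine setOf_lt_eMphi_subset_maximalSuperlevel hφ hA f k ?_
  rw [mem_ofPred_eq] at hx ⊢
  rw [hx]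
  finiteness

lemma memH1_iff_lintegral_eMphi_ne_top [NeZero n] (hf : Integrable f) :
    MemH1 n f ↔ ∀ φ, IsTestFun n φ → ∫⁻ x, eMphi n φ f x ≠ ⊤ := by
  refine forall₂_congr fun φ hφ => ?_
  rw [← integrable_toReal_iff (measurable_eMphi hφ hf).aemeasurable (ae_eMphi_ne_top hφ hf)]
  exact iff_of_eq (congrArg (Integrable ·) (funext (Mphi_eq_toReal_eMphi φ f)))

end ExtendedMaximalFunction

section Sufficiency

variable {n : ℕ} {φ f : En n → ℝ}

lemma exists_eMphi_le_localMaximal_add (hφ : IsTestFun n φ) :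
    ∃ C : ℝ≥0∞, C ≠ ⊤ ∧ ∀ f : En n → ℝ, Integrable f → ∫ x, f x = 0 → ∀ x, eMphi n φ f x ≤
      C * (localMaximal volume (‖f ·‖ₑ) x +
        ∫⁻ y, ENNReal.ofReal (largeScaleKernel x y) * ‖f y‖ₑ) := by
  obtain ⟨A, hA⟩ := hφ.exists_abs_le
  obtain ⟨L, hL⟩ := hφ.exists_lipschitzWith
  refine ⟨ENNReal.ofReal A * volume (ball (0 : En n) 1) + ENNReal.ofReal (2 ^ n * (2 * (A + L))),
    by finiteness, fun f hf hf0 x => iSup_le fun ⟨t, ht⟩ => ?_⟩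
  rcases le_total t ((1 + ‖x‖) / 2) with hsmall | hlarge
  · refine (enorm_phiConv_le hφ hA f x ht).trans (mul_le_mul' le_self_add ?_)
    exact le_add_right
      (le_iSup₂ (f := fun t _ => ⨍⁻ y in closedBall x t, ‖f y‖ₑ ∂volume) t ⟨ht, hsmall⟩)
  · exact (enorm_phiConv_le_lintegral_largeScaleKernel hφ hA hL hf hf0 hlarge).trans
      (mul_le_mul' le_add_self le_add_self)

lemma lintegral_eMphi_lt_top [NeZero n] (hφ : IsTestFun n φ) (hfm : Measurable f)
    (hf : Integrable f) (hf0 : ∫ x, f x = 0) (hlog : lLogL volume f < ⊤) :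
    ∫⁻ x, eMphi n φ f x < ⊤ := by
  have hK := measurable_uncurry_largeScaleKernel (E := En n)
  obtain ⟨C, hC, hle⟩ := exists_eMphi_le_localMaximal_add hφ
  calc ∫⁻ x, eMphi n φ f x
      ≤ ∫⁻ x, C * (localMaximal volume (‖f ·‖ₑ) x +
        ∫⁻ y, ENNReal.ofReal (largeScaleKernel x y) * ‖f y‖ₑ) := lintegral_mono (hle f hf hf0)
    _ = C * ((∫⁻ x, localMaximal volume (‖f ·‖ₑ) x) +
        ∫⁻ x, ∫⁻ y, ENNReal.ofReal (largeScaleKernel x y) * ‖f y‖ₑ) := by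
        rw [lintegral_const_mul' _ _ hC,
          lintegral_add_right _ (Measurable.lintegral_prod_right (by fun_prop))]
    _ < ⊤ := ENNReal.mul_lt_top hC.lt_top (ENNReal.add_lt_top.2
        ⟨lintegral_localMaximal_lt_top hfm hlog,
          lintegral_lintegral_largeScaleKernel_lt_top hfm hlog⟩)

lemma memH1_of_lLogL_lt_top [NeZero n] (hf : Integrable f) (hf0 : ∫ x, f x = 0)
    (hlog : lLogL volume f < ⊤) : MemH1 n f := by
  obtain ⟨f', hf'm, hff'⟩ := hf.aestronglyMeasurable.aemeasurable
  refine (memH1_iff_lintegral_eMphi_ne_top hf).2 fun φ hφ => ?_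
  rw [eMphi_congr_ae hff']
  refine (lintegral_eMphi_lt_top hφ hf'm (hf.congr hff')
    ((integral_congr_ae hff').symm.trans hf0) (lt_of_le_of_lt (lLogL_mono ?_) hlog)).ne
  exact hff'.mono fun x hx => by rw [hx]

end Sufficiency

section Truncation

variable {E : Type*} [NormedAddCommGroup E] [MeasurableSpace E] [OpensMeasurableSpace E]
  {μ : Measure E} {u : E → ℝ}

lemma exists_half_integral_le_setIntegral (hum : Measurable u) (hu : Integrable u μ)
    (hu0 : ∀ x, 0 ≤ u x) :
    ∃ N, 0 < N ∧ (∫ x, u x ∂μ) / 2 ≤ ∫ x in {x | u x ≤ N ∧ ‖x‖ ≤ N}, u x ∂μ := by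
  have hI0 : 0 ≤ ∫ x, u x ∂μ := integral_nonneg hu0
  rcases hI0.eq_or_lt with hI | hI
  · exact ⟨1, one_pos, by rw [← hI, zero_div]; exact integral_nonneg hu0⟩
  have hlim : Tendsto (fun N : ℝ => ∫ x in {x | u x ≤ N ∧ ‖x‖ ≤ N}, u x ∂μ) atTop
      (𝓝 (∫ x, u x ∂μ)) := by
    have hunion : ⋃ N : ℝ, {x | u x ≤ N ∧ ‖x‖ ≤ N} = univ :=
      eq_univ_of_forall fun x => mem_iUnion.2 ⟨max (u x) ‖x‖, le_max_left _ _, le_max_right _ _⟩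
    rw [← setIntegral_univ, ← hunion]
    exact tendsto_setIntegral_of_monotone
      (fun N => (measurableSet_le hum measurable_const).inter
        (measurableSet_le measurable_norm measurable_const))
      (fun M N hMN x hx => ⟨hx.1.trans hMN, hx.2.trans hMN⟩) hu.integrableOn
  obtain ⟨N, hN0, hN⟩ :=
    ((eventually_gt_atTop 0).and (hlim.eventually (lt_mem_nhds (half_lt_self hI)))).exists
  exact ⟨N, hN0, hN.le⟩

lemma exists_bounded_integral_sub_eq_zero (hum : Measurable u) (hu : Integrable u μ)
    (hu0 : ∀ x, 0 ≤ u x) :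
    ∃ (b : E → ℝ) (C R : ℝ), Integrable b μ ∧ (∀ x, |b x| ≤ C) ∧ 0 < R ∧
      (∀ x, R < ‖x‖ → b x = 0) ∧ ∫ x, (u - b) x ∂μ = 0 ∧ ∀ x, |(u - b) x| ≤ |u x| := by
  obtain ⟨N, hN0, hN⟩ := exists_half_integral_le_setIntegral hum hu hu0
  set T : Set E := {x | u x ≤ N ∧ ‖x‖ ≤ N}
  have hT : MeasurableSet T := (measurableSet_le hum measurable_const).inter
    (measurableSet_le measurable_norm measurable_const)
  set c : ℝ := (∫ x, u x ∂μ) / ∫ x in T, u x ∂μ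
  have hI : 0 ≤ ∫ x, u x ∂μ := integral_nonneg hu0
  have hc0 : 0 ≤ c := div_nonneg hI (by linarith)
  have hc2 : c ≤ 2 := div_le_of_le_mul₀ (by linarith) zero_le_two (by linarith)
  have hcT : c * ∫ x in T, u x ∂μ = ∫ x, u x ∂μ :=
    div_mul_cancel_of_imp fun h0 => by linarith
  have hb : Integrable (T.indicator fun x => c * u x) μ := (hu.const_mul c).indicator hT
  refine ⟨T.indicator fun x => c * u x, 2 * N, N, hb, fun x => ?_, hN0,
    fun x hx => indicator_of_notMem (fun hxT => hxT.2.not_gt hx) _, ?_, fun x => ?_⟩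
  · by_cases hx : x ∈ T
    · rw [indicator_of_mem hx, abs_of_nonneg (mul_nonneg hc0 (hu0 x))]
      exact mul_le_mul hc2 hx.1 (hu0 x) zero_le_two
    · rw [indicator_of_notMem hx, abs_zero]
      positivity
  · rw [integral_sub' hu hb, integral_indicator hT, integral_const_mul, hcT, sub_self]
  · by_cases hx : x ∈ T
    · rw [Pi.sub_apply, indicator_of_mem hx, ← one_sub_mul, abs_mul]
      exact mul_le_of_le_one_left (abs_nonneg _) (abs_le.2 ⟨by linarith, by linarith⟩)
    · rw [Pi.sub_apply, indicator_of_notMem hx, sub_zero]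

end Truncation

section Necessity

variable {n : ℕ} {φ f u b : En n → ℝ} {t a C R l : ℝ} {x z : En n}

/-- A test function for lower bounds on the maximal function: nonnegative, and equal to its maximum
`a` on the ball of radius `1 / 2`. -/
structure IsPlateau (n : ℕ) (φ : En n → ℝ) (a : ℝ) : Prop where
  isTestFun : IsTestFun n φ
  nonneg : ∀ x, 0 ≤ φ x
  le : ∀ x, φ x ≤ a
  eq_of_norm_le : ∀ x, ‖x‖ ≤ 1 / 2 → φ x = a
  pos : 0 < a

lemma exists_isPlateau (n : ℕ) : ∃ φ a, IsPlateau n φ a := by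
  let ψ : ContDiffBump (0 : En n) := ⟨1 / 2, 1, by norm_num, by norm_num⟩
  refine ⟨ψ.normed volume, 1 / ∫ x, ψ x,
    ⟨ψ.contDiff_normed, fun x hx => ?_, ψ.integral_normed⟩, ψ.nonneg_normed, fun x => ?_,
    fun x hx => ?_, one_div_pos.2 ψ.integral_pos⟩
  · rw [← Function.notMem_support, ψ.support_normed_eq]
    exact fun hmem => hx (ball_subset_closedBall hmem)
  · rw [ψ.normed_def]
    exact div_le_div_of_nonneg_right ψ.le_one ψ.integral_pos.le
  · rw [ψ.normed_def, ψ.one_of_mem_closedBall (mem_closedBall_zero_iff.2 hx)]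

namespace IsPlateau

lemma abs_le (hφ : IsPlateau n φ a) (x : En n) : |φ x| ≤ a :=
  (abs_of_nonneg (hφ.nonneg x)).trans_le (hφ.le x)

lemma apply_inv_smul (hφ : IsPlateau n φ a) (ht : 0 < t) (hz : ‖z‖ ≤ t / 2) :
    φ (t⁻¹ • z) = a := by
  refine hφ.eq_of_norm_le _ ?_
  rw [norm_smul, norm_of_nonneg (by positivity), inv_mul_le_iff₀ ht]
  linarith

lemma enorm_phiConv_le_of_abs_le (hφ : IsPlateau n φ a) (hbC : ∀ x, |b x| ≤ C) (z : En n)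
    (ht : 0 < t) :
    ‖phiConv n φ b t z‖ₑ ≤
      ENNReal.ofReal a * volume (ball (0 : En n) 1) * ENNReal.ofReal C := by
  refine (enorm_phiConv_le hφ.isTestFun hφ.abs_le b z ht).trans ?_
  gcongr
  calc ⨍⁻ y in closedBall z t, ‖b y‖ₑ ∂volume
      ≤ ⨍⁻ _ in closedBall z t, ENNReal.ofReal C ∂volume := by
        refine lintegral_mono fun y => ?_
        rw [enorm_eq_ofReal_abs]
        exact ofReal_le_ofReal (hbC y)
    _ = ENNReal.ofReal C :=
        setLAverage_const (measure_closedBall_pos volume z ht).ne' measure_closedBall_lt_top.ne _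

lemma le_enorm_phiConv_of_mem_closedBall (hφ : IsPlateau n φ a) (hu : Integrable u)
    (hu0 : ∀ y, 0 ≤ u y) {r : ℝ} (hr : 0 < r) (hz : z ∈ closedBall x r) :
    ENNReal.ofReal (a / 4 ^ n) * volume (ball (0 : En n) 1) *
      ⨍⁻ y in closedBall x r, ‖u y‖ₑ ∂volume ≤ ‖phiConv n φ u (4 * r) z‖ₑ := by
  have ha := hφ.pos
  set F : En n → ℝ := fun y => ((4 * r) ^ n)⁻¹ * φ ((4 * r)⁻¹ • (z - y)) * u y
  have hF0 (y : En n) : 0 ≤ F y := mul_nonneg (mul_nonneg (by positivity) (hφ.nonneg _)) (hu0 y)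
  have hF (y : En n) (hy : y ∈ closedBall x r) :
      ENNReal.ofReal (a / 4 ^ n) * ENNReal.ofReal (r ^ n)⁻¹ * ‖u y‖ₑ ≤ ENNReal.ofReal (F y) := by
    have hplateau : φ ((4 * r)⁻¹ • (z - y)) = a := by
      refine hφ.apply_inv_smul (by positivity) ?_
      rw [← dist_eq_norm]
      linarith [dist_triangle_right z y x, mem_closedBall.1 hz, mem_closedBall.1 hy]
    rw [← ofReal_mul (by positivity), enorm_eq_ofReal (hu0 y), ← ofReal_mul (by positivity)]
    refine ofReal_le_ofReal (le_of_eq ?_)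
    simp only [F, hplateau, mul_pow]
    field_simp
  calc _ = ENNReal.ofReal (a / 4 ^ n) * ENNReal.ofReal (r ^ n)⁻¹ *
          ∫⁻ y in closedBall x r, ‖u y‖ₑ := by
        rw [mul_assoc, ← ofReal_inv_pow_mul_setLIntegral_closedBall _ _ hr,
          finrank_euclideanSpace_fin, mul_assoc]
    _ ≤ ∫⁻ y in closedBall x r, ENNReal.ofReal (F y) := by
        rw [← lintegral_const_mul' _ _ (by finiteness)]
        exact setLIntegral_mono' measurableSet_closedBall hF
    _ ≤ ∫⁻ y, ENNReal.ofReal (F y) := setLIntegral_le_lintegral _ _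
    _ = ‖phiConv n φ u (4 * r) z‖ₑ := by
        rw [← ofReal_integral_eq_lintegral_ofReal (integrable_phiConv hφ.isTestFun hu _ _)
          (.of_forall hF0), phiConv, enorm_eq_ofReal (integral_nonneg hF0)]

lemma maximalSuperlevel_subset_setOf_lt_eMphi (hφ : IsPlateau n φ a) (hu : Integrable u)
    (hu0 : ∀ y, 0 ≤ u y) (hb : Integrable b) (hbC : ∀ x, |b x| ≤ C) (hl : 2 * (4 ^ n * C) < l) :
    maximalSuperlevel volume (‖u ·‖ₑ) (ENNReal.ofReal l) ⊆
      {z | ENNReal.ofReal (a / 4 ^ n / 2) * volume (ball (0 : En n) 1) * ENNReal.ofReal l <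
        eMphi n φ (u - b) z} := by
  intro z hz
  obtain ⟨⟨x, r⟩, ⟨hr, hlr⟩, hzx⟩ := mem_iUnion₂.1 hz
  have ha := hφ.pos
  have hC0 : 0 ≤ C := (abs_nonneg _).trans (hbC 0)
  have hr4 : 0 < 4 * r := mul_pos four_pos hr
  have hl0 : 0 < l := lt_of_le_of_lt (by positivity) hl
  set v : ℝ := (volume (ball (0 : En n) 1)).toReal
  have hv : volume (ball (0 : En n) 1) = ENNReal.ofReal v :=
    (ofReal_toReal measure_ball_lt_top.ne).symm
  have hv0 : 0 < v := toReal_pos (measure_ball_pos _ _ one_pos).ne' measure_ball_lt_top.ne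
  have hu_lower : ENNReal.ofReal (a / 4 ^ n * v * l) ≤ ‖phiConv n φ u (4 * r) z‖ₑ := by
    rw [ofReal_mul (by positivity), ofReal_mul (by positivity), ← hv]
    exact (mul_le_mul_right hlr _).trans (hφ.le_enorm_phiConv_of_mem_closedBall hu hu0 hr hzx)
  have hb_upper : ‖phiConv n φ b (4 * r) z‖ₑ ≤ ENNReal.ofReal (a * v * C) := by
    rw [ofReal_mul (by positivity), ofReal_mul (by positivity), ← hv]
    exact hφ.enorm_phiConv_le_of_abs_le hbC z hr4
  have hsub := phiConv_sub hφ.isTestFun hu hb (4 * r) z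
  rw [enorm_eq_ofReal_abs, ofReal_le_ofReal_iff (by positivity)] at hu_lower hb_upper
  refine lt_of_lt_of_le ?_ (enorm_phiConv_le_eMphi φ (u - b) z hr4)
  rw [hv, ← ofReal_mul (by positivity), ← ofReal_mul (by positivity), enorm_eq_ofReal_abs, hsub]
  have hgap : 2 * (a * v * C) < a / 4 ^ n * v * l :=
    calc 2 * (a * v * C) = a / 4 ^ n * v * (2 * (4 ^ n * C)) := by field_simp
      _ < a / 4 ^ n * v * l := by gcongr
  have haC : 0 ≤ a * v * C := by positivity
  have hdist := abs_sub_abs_le_abs_sub (phiConv n φ u (4 * r) z) (phiConv n φ b (4 * r) z)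
  exact (ofReal_lt_ofReal_iff_of_nonneg (by positivity)).2 (by linarith [haC])

lemma setLIntegral_lt_le_mul_measure_setOf_lt_eMphi [NeZero n] (hφ : IsPlateau n φ a)
    (hum : Measurable u) (hu : Integrable u) (hu0 : ∀ y, 0 ≤ u y) (hb : Integrable b)
    (hbC : ∀ x, |b x| ≤ C) (hl : 2 * (4 ^ n * C) < l) :
    ∫⁻ y in {y | l < u y}, ‖u y‖ₑ ≤ 5 ^ n * (ENNReal.ofReal l *
      volume {z | ENNReal.ofReal (a / 4 ^ n / 2) * volume (ball (0 : En n) 1) * ENNReal.ofReal l <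
        eMphi n φ (u - b) z}) := by
  have hC0 : 0 ≤ C := (abs_nonneg _).trans (hbC 0)
  have hl0 : 0 < l := lt_of_le_of_lt (by positivity) hl
  have hset : {y | l < u y} = {y | ENNReal.ofReal l < ‖u y‖ₑ} := by
    ext y
    rw [mem_ofPred_eq, mem_ofPred_eq, enorm_eq_ofReal (hu0 y),
      ofReal_lt_ofReal_iff_of_nonneg hl0.le]
  have hweak := setLIntegral_lt_le_mul_measure_maximalSuperlevel (μ := volume) hum.enorm
    hu.hasFiniteIntegral.ne (ofReal_pos.2 hl0).ne'
  rw [finrank_euclideanSpace_fin] at hweak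
  rw [hset]
  refine hweak.trans ?_
  gcongr
  exact hφ.maximalSuperlevel_subset_setOf_lt_eMphi hu hu0 hb hbC hl

lemma lintegral_enorm_mul_posLog_div_le [NeZero n] (hφ : IsPlateau n φ a) (hum : Measurable u)
    (hu : Integrable u) (hu0 : ∀ y, 0 ≤ u y) (hb : Integrable b) (hbC : ∀ x, |b x| ≤ C)
    (hl : 2 * (4 ^ n * C) < l) :
    ENNReal.ofReal (a / 4 ^ n / 2) * volume (ball (0 : En n) 1) *
      ∫⁻ y, ‖u y‖ₑ * ENNReal.ofReal (log⁺ (u y / l)) ≤ 5 ^ n * ∫⁻ x, eMphi n φ (u - b) x := by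
  have ha := hφ.pos
  have hC0 : 0 ≤ C := (abs_nonneg _).trans (hbC 0)
  have hl0 : 0 < l := lt_of_le_of_lt (by positivity) hl
  set k : ℝ≥0∞ := ENNReal.ofReal (a / 4 ^ n / 2) * volume (ball (0 : En n) 1)
  have hk0 : k ≠ 0 :=
    mul_ne_zero (ofReal_pos.2 (by positivity)).ne' (measure_ball_pos _ _ one_pos).ne'
  have hkT : k ≠ ⊤ := by finiteness
  have hlt_iff (s : ℝ) (z : En n) : ENNReal.ofReal s < k⁻¹ * eMphi n φ (u - b) z ↔
      k * ENNReal.ofReal s < eMphi n φ (u - b) z := by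
    rw [mul_comm, ← div_eq_mul_inv, ENNReal.lt_div_iff_mul_lt (.inl hk0) (.inl hkT), mul_comm]
  calc k * ∫⁻ y, ‖u y‖ₑ * ENNReal.ofReal (log⁺ (u y / l))
      ≤ k * ∫⁻ s in Ioi 0, 5 ^ n *
          volume {z | ENNReal.ofReal s < k⁻¹ * eMphi n φ (u - b) z} := by
        rw [lintegral_mul_posLog_div hum.enorm hum measurable_const hu0 fun _ => hl0]
        gcongr k * ?_
        refine setLIntegral_mono' measurableSet_Ioi fun s (hs : 0 < s) => ?_
        rcases lt_or_ge s l with hsl | hsl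
        · simp [hsl.not_ge]
        · have hweak := hφ.setLIntegral_lt_le_mul_measure_setOf_lt_eMphi hum hu hu0 hb hbC
            (hl.trans_le hsl)
          simp only [hsl, true_and, hlt_iff]
          refine (mul_le_mul_right hweak _).trans_eq ?_
          rw [mul_left_comm, ← mul_assoc (ENNReal.ofReal _), ← ofReal_mul (by positivity),
            inv_mul_cancel₀ hs.ne', ofReal_one, one_mul]
    _ = 5 ^ n * (k * ∫⁻ x, k⁻¹ * eMphi n φ (u - b) x) := by
        rw [lintegral_const_mul' _ _ (by finiteness), mul_left_comm,
          lintegral_eq_lintegral_measure_ofReal_lt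
            ((measurable_eMphi hφ.isTestFun (hu.sub hb)).const_mul k⁻¹)]
    _ = 5 ^ n * ∫⁻ x, eMphi n φ (u - b) x := by
        rw [lintegral_const_mul' _ _ (inv_ne_top.2 hk0), ← mul_assoc k,
          ENNReal.mul_inv_cancel hk0 hkT, one_mul]

lemma mul_setLIntegral_le_enorm_phiConv (hφ : IsPlateau n φ a) (hf : Integrable f)
    (hf0 : ∫ y, f y = 0) (hx : x ≠ 0) (hpos : ∀ y, ‖x‖ < ‖y‖ → 0 ≤ f y) :
    ENNReal.ofReal (a * ((4 * ‖x‖) ^ n)⁻¹) * ∫⁻ y in {y | 5 * ‖x‖ < ‖y‖}, ‖f y‖ₑ ≤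
      ‖phiConv n φ f (4 * ‖x‖) x‖ₑ := by
  have hx0 : 0 < ‖x‖ := norm_pos_iff.2 hx
  set t := 4 * ‖x‖ with ht
  have ht0 : 0 < t := by positivity
  have ha := hφ.pos
  have hφx : φ (t⁻¹ • x) = a := hφ.apply_inv_smul ht0 (by linarith [ht])
  set F : En n → ℝ := fun y => (t ^ n)⁻¹ * (a - φ (t⁻¹ • (x - y))) * f y
  have hF : -phiConv n φ f t x = ∫ y, F y := by
    rw [phiConv_eq_integral_sub hφ.isTestFun hf hf0, hφx, ← integral_neg]
    congr with y
    simp only [F]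
    ring
  have hF0 (y : En n) : 0 ≤ F y := by
    rcases le_or_gt ‖y‖ ‖x‖ with hy | hy
    · have hφy : φ (t⁻¹ • (x - y)) = a :=
        hφ.apply_inv_smul ht0 (by linarith [norm_sub_le x y])
      simp only [F, hφy, sub_self, mul_zero, zero_mul, le_refl]
    · exact mul_nonneg (mul_nonneg (by positivity) (sub_nonneg.2 (hφ.le _))) (hpos y hy)
  have hFfar (y : En n) (hy : 5 * ‖x‖ < ‖y‖) :
      ENNReal.ofReal (a * (t ^ n)⁻¹) * ‖f y‖ₑ = ENNReal.ofReal (F y) := by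
    have hφy : φ (t⁻¹ • (x - y)) = 0 := by
      refine hφ.isTestFun.apply_inv_smul_eq_zero ht0 ?_
      rw [norm_sub_rev]
      linarith [norm_sub_norm_le y x]
    rw [enorm_eq_ofReal (hpos y (by linarith)), ← ofReal_mul (by positivity)]
    simp only [F, hφy, sub_zero, mul_comm a]
  have hFint : Integrable F := by
    refine ((hf.const_mul ((t ^ n)⁻¹ * a)).sub
      (integrable_phiConv hφ.isTestFun hf t x)).congr (.of_forall fun y => ?_)
    simp only [F, Pi.sub_apply]
    ring
  calc _ = ∫⁻ y in {y | 5 * ‖x‖ < ‖y‖}, ENNReal.ofReal (F y) := by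
        rw [← lintegral_const_mul' _ _ (by finiteness)]
        exact setLIntegral_congr_fun (measurableSet_lt measurable_const measurable_norm) hFfar
    _ ≤ ∫⁻ y, ENNReal.ofReal (F y) := setLIntegral_le_lintegral _ _
    _ = ‖phiConv n φ f t x‖ₑ := by
        rw [← ofReal_integral_eq_lintegral_ofReal hFint (.of_forall hF0), ← hF, ← enorm_neg,
          enorm_eq_ofReal (hF ▸ integral_nonneg hF0)]

lemma lintegral_enorm_mul_posLog_norm_div_le [NeZero n] (hφ : IsPlateau n φ a)
    (hum : Measurable u) (hu0 : ∀ y, 0 ≤ u y) (hf : Integrable f) (hf0 : ∫ y, f y = 0)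
    (hR : 0 < R) (hfu : ∀ y, R < ‖y‖ → f y = u y) :
    n * volume (ball (0 : En n) 1) *
      ∫⁻ y, ‖u y‖ₑ * ENNReal.ofReal (log⁺ (‖y‖ / (5 * R))) ≤
        ENNReal.ofReal (4 ^ n / a) * ∫⁻ x, eMphi n φ f x := by
  have ha := hφ.pos
  have hlog := lintegral_mul_posLog_norm_div volume hum.enorm (c := 5) (by norm_num) hR
  rw [finrank_euclideanSpace_fin] at hlog
  rw [hlog, ← lintegral_const_mul' _ _ (by finiteness)]
  refine lintegral_mono fun x => ?_
  rcases lt_or_ge ‖x‖ R with hx | hx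
  · simp [hx.not_ge]
  have hx0 : 0 < ‖x‖ := hR.trans_le hx
  have hset : {y : En n | R ≤ ‖x‖ ∧ 5 * ‖x‖ < ‖y‖} = {y | 5 * ‖x‖ < ‖y‖} := by
    simp only [hx, true_and]
  have hfar (y : En n) (hy : 5 * ‖x‖ < ‖y‖) : ‖u y‖ₑ = ‖f y‖ₑ := by
    rw [hfu y (by linarith)]
  calc ENNReal.ofReal (‖x‖ ^ n)⁻¹ * ∫⁻ y in {y | R ≤ ‖x‖ ∧ 5 * ‖x‖ < ‖y‖}, ‖u y‖ₑ
      = ENNReal.ofReal (4 ^ n / a) * (ENNReal.ofReal (a * ((4 * ‖x‖) ^ n)⁻¹) *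
          ∫⁻ y in {y | 5 * ‖x‖ < ‖y‖}, ‖f y‖ₑ) := by
        rw [hset, setLIntegral_congr_fun (measurableSet_lt measurable_const measurable_norm) hfar,
          ← mul_assoc, ← ofReal_mul (by positivity), mul_pow]
        congr 2
        field_simp
    _ ≤ ENNReal.ofReal (4 ^ n / a) * eMphi n φ f x := by
        gcongr
        refine (hφ.mul_setLIntegral_le_enorm_phiConv hf hf0 (norm_pos_iff.1 hx0)
          fun y hy => ?_).trans (enorm_phiConv_le_eMphi φ f x (by positivity))
        exact (hu0 y).trans_eq (hfu y (hx.trans_lt hy)).symm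

end IsPlateau

lemma lLogL_lt_top_of_memH1_sub [NeZero n] (hum : Measurable u) (hu : Integrable u)
    (hu0 : ∀ x, 0 ≤ u x) (hb : Integrable b) (hbC : ∀ x, |b x| ≤ C) (hR : 0 < R)
    (hbR : ∀ x, R < ‖x‖ → b x = 0) (hub0 : ∫ x, (u - b) x = 0) (hH : MemH1 n (u - b)) :
    lLogL volume u < ⊤ := by
  obtain ⟨φ, a, hφ⟩ := exists_isPlateau n
  have ha := hφ.pos
  have hC0 : 0 ≤ C := (abs_nonneg _).trans (hbC 0)
  have hM : ∫⁻ x, eMphi n φ (u - b) x ≠ ⊤ :=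
    (memH1_iff_lintegral_eMphi_ne_top (hu.sub hb)).1 hH φ hφ.isTestFun
  have hvol : volume (ball (0 : En n) 1) ≠ 0 := (measure_ball_pos _ _ one_pos).ne'
  have hnear := hφ.lintegral_enorm_mul_posLog_div_le hum hu hu0 hb hbC (lt_add_one _)
  have hfar := hφ.lintegral_enorm_mul_posLog_norm_div_le hum hu0 (hu.sub hb) hub0 hR
    fun y hy => by rw [Pi.sub_apply, hbR y hy, sub_zero]
  refine lLogL_lt_top_of_posLog_div hum hu.hasFiniteIntegral.ne
    (by positivity : 2 * (4 ^ n * C) + 1 ≠ 0) (by positivity : 5 * R ≠ 0) ?_ ?_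
  · refine (lt_top_of_mul_ne_top_right (ne_top_of_le_ne_top (by finiteness) hnear) ?_).ne
    exact mul_ne_zero (ofReal_pos.2 (by positivity)).ne' hvol
  · refine (lt_top_of_mul_ne_top_right (ne_top_of_le_ne_top (by finiteness) hfar) ?_).ne
    exact mul_ne_zero (Nat.cast_ne_zero.2 (NeZero.ne n)) hvol

lemma lLogL_lt_top_of_forall_memH1 [NeZero n] {g : En n → ℝ} (hg : Integrable g)
    (hH : ∀ f : En n → ℝ, Integrable f → ∫ x, f x = 0 → (∀ᵐ x, |f x| ≤ |g x|) → MemH1 n f) :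
    lLogL volume g < ⊤ := by
  set u : En n → ℝ := fun x => |hg.1.mk g x|
  have hgu : ∀ᵐ x, |g x| = |u x| := hg.1.ae_eq_mk.mono fun x hx => by simp only [u, hx, abs_abs]
  have hum : Measurable u := hg.1.stronglyMeasurable_mk.measurable.abs
  have hu0 (x : En n) : 0 ≤ u x := abs_nonneg _
  have hu : Integrable u := (hg.congr hg.1.ae_eq_mk).abs
  obtain ⟨b, C, R, hb, hbC, hR, hbR, hub0, hub⟩ := exists_bounded_integral_sub_eq_zero hum hu hu0
  refine (lLogL_mono (hgu.mono fun x hx => hx.le)).trans_lt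
    (lLogL_lt_top_of_memH1_sub hum hu hu0 hb hbC hR hbR hub0 ?_)
  exact hH _ (hu.sub hb) hub0 (hgu.mono fun x hx => (hub x).trans_eq hx.symm)

end Necessity

lemma lLogL_volume_eq_lintegral_lnp {n : ℕ} (g : En n → ℝ) :
    lLogL volume g = ∫⁻ x, ENNReal.ofReal (|g x| * (1 + lnp |g x| + lnp ‖x‖)) := by
  simp only [lLogL, lnp_eq_posLog, posLog_abs, enorm_eq_ofReal_abs, ofReal_mul (abs_nonneg _)]

theorem global_stein_corollary_general {n : ℕ} (hn : 1 ≤ n) {g : En n → ℝ} (hg : Integrable g) :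
    (∀ f : En n → ℝ, Integrable f → ∫ x, f x = 0 → (∀ᵐ x, |f x| ≤ |g x|) → MemH1 n f) ↔
      ∫⁻ x, ENNReal.ofReal (|g x| * (1 + lnp |g x| + lnp ‖x‖)) < ⊤ := by
  have : NeZero n := ⟨by lia⟩
  rw [← lLogL_volume_eq_lintegral_lnp]
  exact ⟨lLogL_lt_top_of_forall_memH1 hg, fun hlog f hf hf0 hfg =>
    memH1_of_lLogL_lt_top hf hf0 ((lLogL_mono hfg).trans_lt hlog)⟩

/-- **Corollary (maximality of the `L log L`-type condition).**
(i) If `g` is integrable with `∫ |g(x)|(1 + ln₊|g(x)| + ln₊|x|) dx < ∞`, and `f` is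
integrable with `|f| ≤ |g|` a.e. and `∫ f = 0`, then `f ∈ H^1(ℝ^n)`.
(ii) Conversely, if `S` is a set of integrable functions closed under addition,
containing `θ`, such that every integrable `f` with zero integral dominated by some
member of `S` lies in `H^1(ℝ^n)`, then every nonnegative `g ∈ S` satisfies
`∫ g(x)(1 + ln₊ g(x) + ln₊|x|) dx < ∞`. -/
theorem global_stein_corollary (n : ℕ) (hn : 1 ≤ n) (θ : En n → ℝ)
    (hθmeas : Measurable θ) (hθ0 : ∀ x, 0 ≤ θ x) (hθbdd : ∃ C, ∀ x, |θ x| ≤ C)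
    (hθsupp : ∀ x, x ∉ unitQ n → θ x = 0) (hθint : (∫ x, θ x) = 1) :
    (∀ g f : En n → ℝ, Integrable g →
        ∫⁻ x, ENNReal.ofReal (|g x| * (1 + lnp |g x| + lnp ‖x‖)) < ⊤ →
        Integrable f → (∀ᵐ x ∂(volume : Measure (En n)), |f x| ≤ |g x|) →
        (∫ x, f x) = 0 → MemH1 n f) ∧
    (∀ S : Set (En n → ℝ),
        (∀ f ∈ S, Integrable f) →
        (∀ f ∈ S, ∀ g ∈ S, f + g ∈ S) →
        θ ∈ S →
        (∀ f : En n → ℝ, Integrable f → (∫ x, f x) = 0 →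
          (∃ g ∈ S, ∀ᵐ x ∂(volume : Measure (En n)), |f x| ≤ |g x|) → MemH1 n f) →
        ∀ g ∈ S, (∀ x, 0 ≤ g x) →
          ∫⁻ x, ENNReal.ofReal (g x * (1 + lnp (g x) + lnp ‖x‖)) < ⊤) :=
  ⟨fun g f hg hlog hf hfg hf0 => (global_stein_corollary_general hn hg).2 hlog f hf hf0 hfg,
    fun S hS _ _ hH g hg hg0 => by
      simpa only [abs_of_nonneg (hg0 _)] using (global_stein_corollary_general hn (hS g hg)).1
        fun f hf hf0 hfg => hH f hf hf0 ⟨g, hg, hfg⟩⟩
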